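/- arXiv:0712.1725 — 4 statements merged into one kernel-verified Lean document; each statement's English description precedes it below -/
import Mathlib

section
/- Let k be an algebraically closed field of characteristic 0 or p > 2, with the characteristic dividing neither m nor n, let ζ ∈ k be a primitive m-th root of unity, and let n ≥ 3. Let g ∈ GL(n,k) and let θ be the (outer) automorphism of SL(n,k) given by θ(x) = g·(ᵀx)⁻¹·g⁻¹; suppose θ has order exactly m and that m/2 is even. Set 𝔤(1) = {x ∈ sl(n,k) : −g·ᵀx·g⁻¹ = ζ·x}, H = {h ∈ SL(n,k) : θ(h) = h}, let c be a Cartan subspace of 𝔤(1) and r = dim c. Then (g·(ᵀg)⁻¹)^{m/2} = I or −I, and with respect to a suitable basis of c: if (g·(ᵀg)⁻¹)^{m/2} = −I, the little Weyl group of c with respect to H equals G(m,1,r); if (g·(ᵀg)⁻¹)^{m/2} = I, it equals G(m,1,r) when n > mr and there exists x ∈ GL(n,k) with det x = −1 such that g·(ᵀx)⁻¹·g⁻¹ = x and x commutes with every element of c, and it equals G(m,2,r) otherwise. -/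
open Matrix

/-- The group `G(m,q,r)` of `r×r` monomial matrices whose nonzero entries are
`m`-th roots of unity and the product of whose nonzero entries is an
`(m/q)`-th root of unity, as a set of matrices. -/
def GmqrSet (k : Type*) [Field k] (m q r : ℕ) : Set (Matrix (Fin r) (Fin r) k) :=
  {w | ∃ σ : Equiv.Perm (Fin r),
    (∀ i j, i ≠ σ j → w i j = 0) ∧
    (∀ j, w (σ j) j ^ m = 1) ∧
    (∏ j, w (σ j) j) ^ (m / q) = 1}

/-- A matrix is semisimple if it is diagonalizable. -/
def IsSemisimpleMat {k : Type*} [Field k] {N : Type*} [Fintype N] [DecidableEq N]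
    (x : Matrix N N k) : Prop :=
  ∃ P : Matrix N N k, IsUnit P.det ∧ (P * x * P⁻¹).IsDiag

/-- `c` is a Cartan subspace of `g1`: a subspace of `g1`, consisting of
pairwise commuting diagonalizable matrices, and maximal among such. -/
def IsCartanSubspace {k : Type*} [Field k] {N : Type*} [Fintype N] [DecidableEq N]
    (g1 : Set (Matrix N N k)) (c : Submodule k (Matrix N N k)) : Prop :=
  (c : Set (Matrix N N k)) ⊆ g1 ∧
  (∀ x ∈ c, ∀ y ∈ c, x * y = y * x) ∧
  (∀ x ∈ c, IsSemisimpleMat x) ∧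
  ∀ c' : Submodule k (Matrix N N k),
    ((c' : Set (Matrix N N k)) ⊆ g1 ∧ (∀ x ∈ c', ∀ y ∈ c', x * y = y * x) ∧
      (∀ x ∈ c', IsSemisimpleMat x)) → c ≤ c' → c' = c

/-- The little Weyl group of `c` with respect to `H`, written with respect to
the family `b` (a basis of `c`): the set of matrices of the transformations
`x ↦ h·x·h⁻¹` of `c`, for `h ∈ H` normalizing `c`. -/
def littleWeylSet {k : Type*} [Field k] {N : Type*} [Fintype N] [DecidableEq N] {r : ℕ}
    (H : Set (Matrix N N k)) (c : Submodule k (Matrix N N k))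
    (b : Fin r → Matrix N N k) : Set (Matrix (Fin r) (Fin r) k) :=
  {w | ∃ h ∈ H, (∀ x ∈ c, h * x * h⁻¹ ∈ c) ∧ (∀ x ∈ c, h⁻¹ * x * h ∈ c) ∧
    ∀ j, h * b j * h⁻¹ = ∑ i, w i j • b i}



theorem aux_toLin_mul {k : Type*} [Field k] {n : ℕ} (x y : Matrix (Fin n) (Fin n) k) :
    (Matrix.toLin' (x * y) : Module.End k (Fin n → k)) = Matrix.toLin' x * Matrix.toLin' y :=
  Matrix.toLin'_mul x y

theorem aux_ss_of_mat {k : Type*} [Field k] {n : ℕ} (x : Matrix (Fin n) (Fin n) k)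
    (hx : IsSemisimpleMat x) : Module.End.IsSemisimple (Matrix.toLin' x) := by
  classical
  obtain ⟨P, hP, hD⟩ := hx
  set d := (P * x * P⁻¹).diag with hd
  have hD' : P * x * P⁻¹ = diagonal d := hD.diagonal_diag.symm
  have hxP : x * P⁻¹ = P⁻¹ * diagonal d := by
    rw [← hD']
    rw [← Matrix.mul_assoc, ← Matrix.mul_assoc, Matrix.nonsing_inv_mul _ hP, Matrix.one_mul]
  have hpoly : ∀ p : Polynomial k, Polynomial.aeval x p * P⁻¹
      = P⁻¹ * diagonal (fun i => p.eval (d i)) := by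
    intro p
    induction p using Polynomial.induction_on' with
    | add p q hp hq =>
      rw [map_add, Matrix.add_mul, hp, hq, ← Matrix.mul_add, Matrix.diagonal_add]
      simp
    | monomial j a =>
      have : ∀ j : ℕ, x ^ j * P⁻¹ = P⁻¹ * diagonal (fun i => d i ^ j) := by
        intro j
        induction j with
        | zero => simp
        | succ j ih =>
          rw [pow_succ, Matrix.mul_assoc, hxP, ← Matrix.mul_assoc, ih, Matrix.mul_assoc,
            Matrix.diagonal_mul_diagonal]
          simp [pow_succ]
      rw [Polynomial.aeval_monomial, Matrix.mul_assoc, this]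
      simp only [Polynomial.eval_monomial]
      ext i l
      simp [Matrix.algebraMap_eq_diagonal, Matrix.mul_apply, Matrix.diagonal_apply]
      ring
  set p : Polynomial k := ∏ a ∈ Finset.univ.image d, (Polynomial.X - Polynomial.C a) with hp
  have hsq : Squarefree p := by
    have : p.Separable := Polynomial.separable_prod_X_sub_C_iff'.2 (by
      intro a _ b _ h; exact h)
    exact this.squarefree
  refine Module.End.isSemisimple_of_squarefree_aeval_eq_zero hsq ?_
  have h0 : Polynomial.aeval x p = 0 := by
    have h1 := hpoly p
    have h2 : (fun i => p.eval (d i)) = 0 := by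
      funext i
      simp only [hp, Polynomial.eval_prod, Pi.zero_apply]
      apply Finset.prod_eq_zero (Finset.mem_image_of_mem d (Finset.mem_univ i))
      simp
    have hz : (diagonal (fun i => p.eval (d i)) : Matrix (Fin n) (Fin n) k) = 0 := by
      rw [h2]; exact Matrix.diagonal_zero'
    rw [hz, Matrix.mul_zero] at h1
    have := congrArg (· * P) h1
    simpa [Matrix.mul_assoc, Matrix.nonsing_inv_mul _ hP] using this
  have h3 : Polynomial.aeval (Matrix.toLin' x) p = Matrix.toLin' (Polynomial.aeval x p) := by
    have := Polynomial.aeval_algHom_apply (Matrix.toLinAlgEquiv' (R := k) (n := Fin n)).toAlgHom x p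
    exact this
  rw [h3, h0, map_zero]

theorem aux_mat_of_ss {k : Type*} [Field k] [IsAlgClosed k] {n : ℕ} (x : Matrix (Fin n) (Fin n) k)
    (hx : Module.End.IsSemisimple (Matrix.toLin' x)) : IsSemisimpleMat x := by
  classical
  have htop : ⨆ μ, Module.End.eigenspace (Matrix.toLin' x) μ = ⊤ := by
    rw [← hx.isFinitelySemisimple.iSup_maxGenEigenspace_eq_top_iff]
    exact Module.End.iSup_maxGenEigenspace_eq_top _
  set s : Set (Fin n → k) := {z | ∃ μ : k, x *ᵥ z = μ • z} with hs
  have hspan : ⊤ ≤ Submodule.span k s := by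
    rw [← htop]
    refine iSup_le fun μ z hz => Submodule.subset_span ⟨μ, ?_⟩
    rw [Module.End.mem_eigenspace_iff] at hz
    simpa using hz
  let B0 := Module.Basis.ofSpan hspan
  have hB0 : ∀ i, B0 i ∈ s := by
    intro i
    have : B0 i ∈ Set.range B0 := ⟨i, rfl⟩
    exact Module.Basis.ofSpan_subset hspan this
  haveI : Fintype ((linearIndepOn_empty k id).extend (Set.empty_subset s)) :=
    FiniteDimensional.fintypeBasisIndex B0
  have hcard : Fintype.card ((linearIndepOn_empty k id).extend (Set.empty_subset s)) = n := by
    rw [← Module.finrank_eq_card_basis B0]; simp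
  let B := B0.reindex (Fintype.equivFinOfCardEq hcard)
  have hB : ∀ i, ∃ μ : k, x *ᵥ (B i) = μ • B i := by
    intro i; simp only [B, Module.Basis.reindex_apply]; exact hB0 _
  choose μ hμ using hB
  let Q : Matrix (Fin n) (Fin n) k := (Pi.basisFun k (Fin n)).toMatrix B
  have hQ : Q * B.toMatrix (Pi.basisFun k (Fin n)) = 1 := Module.Basis.toMatrix_mul_toMatrix_flip _ _
  have hQu : IsUnit Q.det := Matrix.isUnit_det_of_right_inverse hQ
  refine ⟨Q⁻¹, by simpa using hQu, ?_⟩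
  rw [Matrix.nonsing_inv_nonsing_inv _ hQu]
  have : x * Q = Q * diagonal μ := by
    ext i j
    have := congrFun (hμ j) i
    simp only [Matrix.mulVec, dotProduct, Pi.smul_apply, smul_eq_mul] at this
    simp only [Matrix.mul_diagonal]
    simp only [Matrix.mul_apply, Q, Module.Basis.toMatrix_apply, Pi.basisFun_repr]
    rw [this, mul_comm]
  rw [Matrix.mul_assoc, this, ← Matrix.mul_assoc, Matrix.nonsing_inv_mul _ hQu, Matrix.one_mul]
  exact Matrix.isDiag_diagonal _

/-- joint weight vectors span -/
theorem aux_weights {k : Type*} [Field k] [IsAlgClosed k] {n : ℕ}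
    (c : Submodule k (Matrix (Fin n) (Fin n) k))
    (hcomm : ∀ x ∈ c, ∀ y ∈ c, x * y = y * x) (hss : ∀ x ∈ c, IsSemisimpleMat x) :
    Submodule.span k {z : Fin n → k | ∃ χ : c → k, ∀ x : c, x.1 *ᵥ z = χ x • z} = ⊤ := by
  have h := Module.End.iSup_iInf_maxGenEigenspace_eq_top_of_iSup_maxGenEigenspace_eq_top_of_commute
    (fun x : c => Matrix.toLin' x.1) (by
      intro x y _
      show Matrix.toLin' x.1 * Matrix.toLin' y.1 = Matrix.toLin' y.1 * Matrix.toLin' x.1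
      rw [← aux_toLin_mul, ← aux_toLin_mul, hcomm _ x.2 _ y.2])
    (fun x => Module.End.iSup_maxGenEigenspace_eq_top _)
  rw [eq_top_iff, ← h]
  refine iSup_le fun χ z hz => Submodule.subset_span ⟨χ, fun x => ?_⟩
  have := (Submodule.mem_iInf _).1 hz x
  rw [(aux_ss_of_mat x.1 (hss _ x.2)).isFinitelySemisimple.maxGenEigenspace_eq_eigenspace,
    Module.End.mem_eigenspace_iff] at this
  simpa using this

theorem aux_ss_add {k : Type*} [Field k] [IsAlgClosed k] {n : ℕ} (x y : Matrix (Fin n) (Fin n) k)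
    (hx : IsSemisimpleMat x) (hxy : x * y = y * x)
    (m : ℕ) (hm : (m : k) ≠ 0) (hy : y ^ (m + 1) = y) (t : k) : IsSemisimpleMat (x + t • y) := by
  apply aux_mat_of_ss
  have hY : Module.End.IsSemisimple (Matrix.toLin' y) := by
    have hsep : (Polynomial.X ^ m - 1 : Polynomial k).Separable :=
      Polynomial.separable_X_pow_sub_C 1 hm one_ne_zero
    have hm0 : m ≠ 0 := by rintro rfl; simp at hm
    have hsq : Squarefree (Polynomial.X * (Polynomial.X ^ m - 1) : Polynomial k) := by
      refine (Polynomial.Separable.mul Polynomial.separable_X hsep ?_).squarefree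
      refine ⟨Polynomial.X ^ (m-1), -1, ?_⟩
      rw [← pow_succ, Nat.sub_add_cancel (Nat.pos_of_ne_zero hm0)]; ring
    refine Module.End.isSemisimple_of_squarefree_aeval_eq_zero hsq ?_
    have : (Matrix.toLin' y : Module.End k (Fin n → k)) ^ (m+1) = Matrix.toLin' y := by
      rw [← Matrix.toLin'_pow, hy]
    simp only [map_mul, map_sub, map_pow, Polynomial.aeval_X, map_one]
    rw [mul_sub, ← pow_succ', this]; simp
  rw [map_add, map_smul]
  refine Module.End.IsSemisimple.add_of_commute ?_ (aux_ss_of_mat x hx) (Module.End.IsSemisimple_smul t hY)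
  show _ * _ = _ * _
  rw [mul_smul_comm, smul_mul_assoc, ← aux_toLin_mul, ← aux_toLin_mul, hxy]

theorem aux_W_sub {k : Type*} [Field k] {n r m : ℕ} (hm : 2 ≤ m)
    (b : Fin r → Matrix (Fin n) (Fin n) k)
    (hbb : ∀ i j, i ≠ j → b i * b j = 0) (hpow : ∀ j, b j ^ (m + 1) = b j)
    (hb0 : LinearIndependent k b)
    (h : Matrix (Fin n) (Fin n) k) (hh : IsUnit h.det) (w : Matrix (Fin r) (Fin r) k)
    (hw : ∀ j, h * b j * h⁻¹ = ∑ i, w i j • b i) : w ∈ GmqrSet k m 1 r := by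
  classical
  have hne : ∀ j, b j ≠ 0 := fun j => hb0.ne_zero j
  have h3 : ∀ j, b j * (b j * b j) ≠ 0 := by
    intro j h0
    apply hne j
    rw [← hpow j]
    obtain ⟨t, rfl⟩ := Nat.exists_eq_add_of_le hm
    have : b j ^ (2 + t + 1) = (b j * (b j * b j)) * b j ^ t := by
      rw [show 2 + t + 1 = 3 + t by ring, pow_add]; congr 1; rw [pow_succ, pow_two, mul_assoc]
    rw [this, h0, zero_mul]
  have hinv : h⁻¹ * h = 1 := Matrix.nonsing_inv_mul _ hh
  have hmulsum : ∀ i (f : Fin r → k), b i * ∑ l, f l • b l = f i • (b i * b i) := by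
    intro i f
    rw [Finset.mul_sum, Finset.sum_eq_single i]
    · rw [mul_smul_comm]
    · intro l _ hl; rw [mul_smul_comm, hbb i l (Ne.symm hl), smul_zero]
    · simp
  have hrow : ∀ i j l, j ≠ l → w i j * w i l = 0 := by
    intro i j l hjl
    have e1 : (h * b j * h⁻¹) * (h * b l * h⁻¹) = 0 := by
      calc _ = h * b j * (h⁻¹ * h) * b l * h⁻¹ := by simp only [mul_assoc]
        _ = h * (b j * b l) * h⁻¹ := by rw [hinv]; simp only [mul_assoc, one_mul]
        _ = 0 := by rw [hbb j l hjl]; simp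
    rw [hw, hw] at e1
    have e2 : b i * ((∑ i, w i j • b i) * ∑ i, w i l • b i) = 0 := by rw [e1, mul_zero]
    rw [← mul_assoc, hmulsum, smul_mul_assoc, mul_assoc, hmulsum, mul_smul_comm, smul_smul] at e2
    exact (smul_eq_zero.1 e2).resolve_right (h3 i)
  have hconj : ∀ j p, (h * b j * h⁻¹) ^ p = h * b j ^ p * h⁻¹ := by
    intro j p
    induction p with
    | zero => simp [Matrix.mul_nonsing_inv _ hh]
    | succ p ih =>
      rw [pow_succ, ih, pow_succ]
      calc _ = h * b j ^ p * (h⁻¹ * h) * b j * h⁻¹ := by simp only [mul_assoc]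
        _ = _ := by rw [hinv]; simp only [mul_assoc, one_mul]
  have hsumpow : ∀ (f : Fin r → k) (p : ℕ), (∑ l, f l • b l) ^ (p+1) = ∑ l, f l ^ (p+1) • b l ^ (p+1) := by
    intro f p
    induction p with
    | zero => simp
    | succ p ih =>
      rw [pow_succ, ih, Finset.sum_mul]
      refine Finset.sum_congr rfl fun l _ => ?_
      rw [smul_mul_assoc, pow_succ (b l), mul_assoc, hmulsum, mul_smul_comm, smul_smul, pow_succ (f l) (p+1),
        ← mul_assoc, ← pow_succ, ← pow_succ, ← pow_succ]
  have hent : ∀ i j, w i j ^ (m+1) = w i j := by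
    intro i j
    have e1 := hconj j (m+1)
    rw [hpow, hw, hsumpow] at e1
    simp only [hpow] at e1
    have := (Fintype.linearIndependent_iff.1 hb0) (fun l => w l j ^ (m+1) - w l j) (by
      simp only [sub_smul, Finset.sum_sub_distrib]; rw [e1, sub_self])
    exact sub_eq_zero.1 (this i)
  have hcol : ∀ j, ∃ i, w i j ≠ 0 := by
    intro j
    by_contra! hcon
    have e := hw j
    simp only [hcon, zero_smul, Finset.sum_const_zero] at e
    apply hne j
    have : h⁻¹ * (h * b j * h⁻¹) * h = b j := by
      calc _ = (h⁻¹ * h) * b j * (h⁻¹ * h) := by simp only [mul_assoc]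
        _ = _ := by rw [hinv]; simp
    rw [← this, e]; simp
  choose f hf using hcol
  have hinj : Function.Injective f := by
    intro j l hjl
    by_contra hne'
    have := hrow (f j) j l hne'
    rcases mul_eq_zero.1 this with h1 | h1
    · exact hf j h1
    · rw [hjl] at h1; exact hf l h1
  let σ : Equiv.Perm (Fin r) := Equiv.ofBijective f (Finite.injective_iff_bijective.1 hinj)
  have hroot : ∀ j, w (σ j) j ^ m = 1 := by
    intro j
    have := hent (f j) j
    rw [pow_succ] at this
    exact mul_right_cancel₀ (hf j) (by rw [one_mul]; exact this)
  refine ⟨σ, ?_, hroot, ?_⟩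
  · intro i j hij
    obtain ⟨l, rfl⟩ := σ.surjective i
    have hlj : l ≠ j := fun e => hij (by rw [e])
    exact (mul_eq_zero.1 (hrow (σ l) l j hlj)).resolve_left (hf l)
  · rw [Nat.div_one, ← Finset.prod_pow]
    exact Finset.prod_eq_one fun j _ => hroot j

theorem aux_sign_shift (m : ℕ) [NeZero m] (hm : Even m) (a : ZMod m) :
    Equiv.Perm.sign (Equiv.addRight a : Equiv.Perm (ZMod m)) = (-1) ^ a.val := by
  have h1 : Equiv.Perm.sign (Equiv.addRight (1 : ZMod m) : Equiv.Perm (ZMod m)) = -1 := by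
    obtain ⟨t, rfl⟩ : ∃ t, m = t + 1 := ⟨m - 1, by have := NeZero.pos m; omega⟩
    have : (Equiv.addRight (1 : ZMod (t+1)) : Equiv.Perm (ZMod (t+1))) = finRotate (t+1) := by
      ext1 i
      exact (finRotate_apply i).symm
    rw [this]
    have h2 := sign_finRotate (t + 1)
    rw [Nat.add_sub_cancel] at h2
    have h3 : Odd t := by rcases Nat.even_or_odd t with h | h
                          · exact absurd hm (by simpa [Nat.even_add_one] using h)
                          · exact h
    rw [h3.neg_one_pow] at h2
    exact h2
  have h2 : (Equiv.addRight a : Equiv.Perm (ZMod m)) = (Equiv.addRight (1 : ZMod m)) ^ a.val := by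
    have : ∀ t : ℕ, ∀ i : ZMod m, ((Equiv.addRight (1 : ZMod m) : Equiv.Perm (ZMod m)) ^ t) i = i + t := by
      intro t
      induction t with
      | zero => simp
      | succ t ih => intro i; rw [pow_succ', Equiv.Perm.mul_apply, ih]; simp [add_assoc]
    ext1 i
    rw [this]; simp
  rw [h2, map_pow, h1]

/-- Gram matrix of the frame -/
def auxQ {k : Type*} [Field k] {m : ℕ} (r : ℕ) (κ : AddChar (ZMod m) k) :
    Matrix (Fin r × ZMod m) (Fin r × ZMod m) k :=
  Matrix.of fun p q => if q = (p.1, p.2 + 1) then κ p.2 else 0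

def auxD {k : Type*} [Field k] {m r : ℕ} (e : AddChar (ZMod m) k) (j : Fin r) :
    Fin r × ZMod m → k := fun p => if p.1 = j then e p.2 else 0

theorem aux_hw {k : Type*} [Field k] {n r m : ℕ} [NeZero m] (hm : Even m)
    (S : Matrix (Fin n) (Fin n) k) (e κ : AddChar (ZMod m) k)
    (U : Matrix (Fin n) (Fin r × ZMod m) k) (U' : Matrix (Fin r × ZMod m) (Fin n) k)
    (hU : U' * U = 1) (hL : Uᵀ * S = auxQ r κ * U') (hR : S * U = U'ᵀ * auxQ r κ)
    (μ : k) (hκ : ∀ a, μ ^ a.val * μ ^ a.val * κ a = 1)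
    (σ : Equiv.Perm (Fin r)) (a : Fin r → ZMod m) :
    ∃ h : Matrix (Fin n) (Fin n) k, hᵀ * S * h = S ∧ h.det = (-(μ ^ m)) ^ (∑ j, (a j).val) ∧
      ∀ j, h * (U * (diagonal (auxD e j) : Matrix (Fin r × ZMod m) (Fin r × ZMod m) k) * U') =
        (e (-(a j)) • (U * (diagonal (auxD e (σ j)) :
          Matrix (Fin r × ZMod m) (Fin r × ZMod m) k) * U')) * h := by
  classical
  let π : Equiv.Perm (Fin r × ZMod m) :=
    (Equiv.prodCongrLeft (fun _ : ZMod m => σ)) *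
      Equiv.prodCongrRight (fun j => (Equiv.addRight (a j) : Equiv.Perm (ZMod m)))
  have hπ : ∀ p, π p = (σ p.1, p.2 + a p.1) := fun p => rfl
  let d : Fin r × ZMod m → k := fun p => μ ^ (a p.1).val
  let M : Matrix (Fin r × ZMod m) (Fin r × ZMod m) k := (diagonal d).submatrix (π⁻¹ : Equiv.Perm _) id
  have hM : ∀ p q, M p q = if p = π q then d q else 0 := by
    intro p q
    simp only [M, Matrix.submatrix_apply, Matrix.diagonal_apply, id]
    by_cases h : p = π q
    · subst h; simp
    · have : ¬ (π⁻¹ p = q) := fun h' => h (by rw [← h']; simp)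
      rw [if_neg this, if_neg h]
  have hXM : ∀ (X : Matrix (Fin r × ZMod m) (Fin r × ZMod m) k) p q, (X * M) p q = X p (π q) * d q := by
    intro X p q
    rw [Matrix.mul_apply]
    simp [hM]
  have hMX : ∀ (X : Matrix (Fin r × ZMod m) (Fin r × ZMod m) k) p q, (Mᵀ * X) p q = d p * X (π p) q := by
    intro X p q
    rw [Matrix.mul_apply]
    simp [hM]
  have hdet : M.det = (-(μ ^ m)) ^ (∑ j, (a j).val) := by
    have h1 : Equiv.Perm.sign (π⁻¹ : Equiv.Perm _) = ∏ j, (-1) ^ (a j).val := by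
      rw [Equiv.Perm.sign_inv, Equiv.Perm.sign_mul, Equiv.Perm.sign_prodCongrLeft,
        Equiv.Perm.sign_prodCongrRight]
      have : (∏ _k : ZMod m, Equiv.Perm.sign σ) = 1 := by
        rw [Finset.prod_const, Finset.card_univ, ZMod.card]
        obtain ⟨t, rfl⟩ := hm
        rw [← two_mul, pow_mul]; simp
      rw [this, one_mul]
      exact Finset.prod_congr rfl fun j _ => aux_sign_shift m hm (a j)
    rw [Matrix.det_permute, h1, Matrix.det_diagonal, Fintype.prod_prod_type]
    simp only [d, Finset.prod_const, Finset.card_univ, ZMod.card]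
    push_cast
    rw [← Finset.prod_mul_distrib, ← Finset.prod_pow_eq_pow_sum]
    refine Finset.prod_congr rfl fun j _ => ?_
    rw [← pow_mul, mul_comm _ m, pow_mul, ← mul_pow]; ring
  have hQ : Mᵀ * auxQ r κ * M = auxQ r κ := by
    ext p q
    rw [hXM, hMX]
    simp only [auxQ, Matrix.of_apply, hπ]
    by_cases h : q = (p.1, p.2 + 1)
    · subst h
      have : p.2 + 1 + a p.1 = p.2 + a p.1 + 1 := by ring
      simp only [this, d, if_true]
      have h2 := hκ (a p.1)
      rw [AddChar.map_add_eq_mul]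
      linear_combination κ p.2 * h2
    · have : ¬ ((σ q.1, q.2 + a q.1) = (σ p.1, p.2 + a p.1 + 1)) := by
        intro h'
        apply h
        simp only [Prod.mk.injEq, EmbeddingLike.apply_eq_iff_eq] at h'
        obtain ⟨h1, h2⟩ := h'
        rw [h1] at h2
        ext1
        · exact h1
        · have : q.2 + a p.1 = (p.2 + 1) + a p.1 := by rw [h2]; ring
          exact add_right_cancel this
      simp [h, this]
  have hMD : ∀ j, M * diagonal (auxD e j) = (e (-(a j)) • diagonal (auxD e (σ j))) * M := by
    intro j
    ext p q
    rw [hXM, Matrix.mul_diagonal, hM]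
    simp only [Matrix.smul_apply, Matrix.diagonal_apply, smul_eq_mul]
    by_cases h : p = π q
    · subst h
      simp only [if_true, auxD, hπ, EmbeddingLike.apply_eq_iff_eq]
      by_cases hj : q.1 = j
      · subst hj
        simp only [if_true, AddChar.map_add_eq_mul]
        have : e (-a q.1) * e (a q.1) = 1 := by rw [← AddChar.map_add_eq_mul]; simp
        linear_combination (-(d q * e q.2)) * this
      · simp [hj]
    · simp [h]
  have hUU : ∀ X : Matrix (Fin r × ZMod m) (Fin n) k, U' * (U * X) = X := by
    intro X; rw [← Matrix.mul_assoc, hU, Matrix.one_mul]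
  refine ⟨1 + U * ((M - 1) * U'), ?_, ?_, ?_⟩
  · have key : (M - 1)ᵀ * auxQ r κ + auxQ r κ * (M - 1) + (M-1)ᵀ * auxQ r κ * (M - 1) = 0 := by
      have : (M - 1)ᵀ * auxQ r κ + auxQ r κ * (M - 1) + (M-1)ᵀ * auxQ r κ * (M - 1) = Mᵀ * auxQ r κ * M - auxQ r κ := by
        rw [Matrix.transpose_sub, Matrix.transpose_one]; noncomm_ring
      rw [this, hQ, sub_self]
    have e1 : (1 + U * ((M - 1) * U'))ᵀ * S = S + U'ᵀ * ((M-1)ᵀ * (auxQ r κ * U')) := by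
      rw [Matrix.transpose_add, Matrix.transpose_one, Matrix.transpose_mul, Matrix.transpose_mul,
        Matrix.add_mul, Matrix.one_mul, Matrix.mul_assoc, hL, Matrix.mul_assoc]
    rw [e1, Matrix.mul_add, Matrix.mul_one, Matrix.add_mul]
    have e2 : S * (U * ((M - 1) * U')) = U'ᵀ * (auxQ r κ * (M - 1)) * U' := by
      rw [← Matrix.mul_assoc, hR]; simp only [Matrix.mul_assoc]
    have e3 : U'ᵀ * ((M-1)ᵀ * (auxQ r κ * U')) * (U * ((M - 1) * U'))
        = U'ᵀ * ((M-1)ᵀ * auxQ r κ * (M-1)) * U' := by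
      simp only [Matrix.mul_assoc, hUU]
    have e4 : U'ᵀ * ((M-1)ᵀ * (auxQ r κ * U')) = U'ᵀ * ((M-1)ᵀ * auxQ r κ) * U' := by
      simp only [Matrix.mul_assoc]
    rw [e2, e3, e4]
    have : U'ᵀ * ((M-1)ᵀ * auxQ r κ) * U' + (U'ᵀ * (auxQ r κ * (M - 1)) * U' +
        U'ᵀ * ((M-1)ᵀ * auxQ r κ * (M-1)) * U') = 0 := by
      rw [← Matrix.add_mul, ← Matrix.mul_add, ← Matrix.add_mul, ← Matrix.mul_add, ← add_assoc, key]
      simp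
    rw [add_assoc, this, add_zero]
  · rw [← hdet, ← Matrix.mul_assoc, Matrix.mul_assoc, Matrix.det_one_add_mul_comm, Matrix.mul_assoc, hU, Matrix.mul_one]
    congr 1; abel
  · intro j
    have l1 : (1 + U * ((M - 1) * U')) * (U * diagonal (auxD e j) * U')
        = U * (M * diagonal (auxD e j)) * U' := by
      rw [Matrix.add_mul, Matrix.one_mul]
      simp only [Matrix.mul_assoc, hUU, Matrix.sub_mul, Matrix.mul_sub, Matrix.one_mul]
      abel
    have l2 : (U * diagonal (auxD e (σ j)) * U') * (1 + U * ((M - 1) * U'))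
        = U * (diagonal (auxD e (σ j)) * M) * U' := by
      rw [Matrix.mul_add, Matrix.mul_one]
      simp only [Matrix.mul_assoc, hUU, Matrix.sub_mul, Matrix.mul_sub, Matrix.one_mul]
      abel
    rw [l1, hMD, Matrix.smul_mul, Matrix.smul_mul, l2, Matrix.mul_smul, Matrix.smul_mul]

theorem aux_prod_one {k : Type*} [Field k] {m : ℕ} [NeZero m] (hm : Even m) (t : ZMod m → k)
    (ht : ∀ i, t i * t (i + 1) = 1) : ∏ i, t i = 1 := by
  have h1 : ∏ i, t i = ∏ i ∈ Finset.range m, t (i : ZMod m) := by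
    obtain ⟨s, rfl⟩ : ∃ s, m = s + 1 := ⟨m - 1, by have := NeZero.pos m; omega⟩
    rw [← Fin.prod_univ_eq_prod_range (fun i => t (i : ZMod (s+1)))]
    refine Finset.prod_congr rfl fun i _ => ?_
    congr 1
    exact (ZMod.natCast_zmod_val (n := s+1) i).symm
  have h2 : ∀ p : ℕ, ∏ i ∈ Finset.range (p + p), t (i : ZMod m) = 1 := by
    intro p
    induction p with
    | zero => simp
    | succ p ih =>
      rw [show p + 1 + (p + 1) = p + p + 1 + 1 by ring, Finset.prod_range_succ, Finset.prod_range_succ, ih,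
        one_mul]
      have := ht ((p + p : ℕ) : ZMod m)
      rw [← this]; push_cast; rfl
  obtain ⟨p, hp⟩ := hm
  rw [h1]
  have := h2 p
  rwa [← hp] at this

theorem aux_det_one {k : Type*} [Field k] {n r m : ℕ} [NeZero m] (hm : Even m)
    (S : Matrix (Fin n) (Fin n) k) (e κ : AddChar (ZMod m) k) (he : Function.Injective e)
    (U : Matrix (Fin n) (Fin r × ZMod m) k) (U' : Matrix (Fin r × ZMod m) (Fin n) k)
    (hU : U' * U = 1) (hL : Uᵀ * S = auxQ r κ * U')
    (hn : n ≤ m * r)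
    (x : Matrix (Fin n) (Fin n) k) (hx : xᵀ * S * x = S)
    (hxb : ∀ j, x * (U * (diagonal (auxD e j) : Matrix (Fin r × ZMod m) (Fin r × ZMod m) k) * U') =
      (U * (diagonal (auxD e j) : Matrix (Fin r × ZMod m) (Fin r × ZMod m) k) * U') * x) :
    x.det = 1 := by
  classical
  have hcard : Fintype.card (Fin r × ZMod m) = Fintype.card (Fin n) := by
    rw [Fintype.card_prod, ZMod.card, Fintype.card_fin, Fintype.card_fin]
    apply le_antisymm
    · have h1 : (U' * U).rank = r * m := by rw [hU, Matrix.rank_one]; simp [ZMod.card]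
      have h2 := Matrix.rank_mul_le_right U' U
      have h3 := Matrix.rank_le_card_height U
      rw [Fintype.card_fin] at h3
      omega
    · rw [mul_comm]; exact hn
  have hU2 : U * U' = 1 := (Matrix.mul_eq_one_comm_of_card_eq _ _ _ hcard).1 hU
  set X := U' * x * U with hX
  have hdet : x.det = X.det := by
    have h1 : x = U * (U' * x) := by rw [← Matrix.mul_assoc, hU2, Matrix.one_mul]
    conv_lhs => rw [h1]
    exact Matrix.det_comm' hU2 hU
  have hcomm : ∀ j, X * diagonal (auxD e j) = diagonal (auxD e j) * X := by
    intro j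
    have h1 : U' * (x * (U * diagonal (auxD e j) * U')) * U = U' * ((U * diagonal (auxD e j) * U') * x) * U := by
      rw [hxb j]
    have a1 : U' * (x * (U * diagonal (auxD e j) * U')) * U = X * diagonal (auxD e j) * (U' * U) := by
      simp only [hX, Matrix.mul_assoc]
    have a2 : U' * ((U * diagonal (auxD e j) * U') * x) * U = (U' * U) * diagonal (auxD e j) * X := by
      simp only [hX, Matrix.mul_assoc]
    rw [a1, a2, hU, Matrix.mul_one, Matrix.one_mul] at h1
    exact h1
  have hene : ∀ i, e i ≠ 0 := fun i h0 => by
    have : e (i + -i) = 0 := by rw [AddChar.map_add_eq_mul, h0, zero_mul]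
    simp at this
  have hdiag : ∀ p q, p ≠ q → X p q = 0 := by
    intro p q hpq
    have h1 := congrFun (congrFun (hcomm q.1) p) q
    rw [Matrix.mul_diagonal, Matrix.diagonal_mul] at h1
    simp only [auxD, if_true] at h1
    by_cases h : p.1 = q.1
    · rw [if_pos h] at h1
      have h2 : p.2 ≠ q.2 := fun h2 => hpq (Prod.ext h h2)
      have h3 : e q.2 - e p.2 ≠ 0 := sub_ne_zero.2 fun h' => h2 (he h').symm
      have : X p q * (e q.2 - e p.2) = 0 := by linear_combination h1
      exact (mul_eq_zero.1 this).resolve_right h3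
    · rw [if_neg h, zero_mul] at h1
      exact (mul_eq_zero.1 h1).resolve_right (hene _)
  set t : Fin r × ZMod m → k := fun p => X p p with ht
  have hXd : X = diagonal t := by
    ext p q
    by_cases h : p = q
    · subst h; simp [ht]
    · rw [hdiag p q h, Matrix.diagonal_apply_ne _ h]
  have hQ : auxQ r κ = Uᵀ * S * U := by rw [hL, Matrix.mul_assoc, hU, Matrix.mul_one]
  have hXQ : Xᵀ * auxQ r κ * X = auxQ r κ := by
    rw [hQ, hX]
    have h2 : U'ᵀ * Uᵀ = 1 := by rw [← Matrix.transpose_mul, hU2, Matrix.transpose_one]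
    calc (U' * x * U)ᵀ * (Uᵀ * S * U) * (U' * x * U)
        = Uᵀ * (xᵀ * (U'ᵀ * Uᵀ) * S * (U * U') * x) * U := by
          simp only [Matrix.transpose_mul, Matrix.mul_assoc]
      _ = Uᵀ * (xᵀ * S * x) * U := by rw [h2, hU2]; simp only [Matrix.mul_one]
      _ = _ := by rw [hx]
  have htt : ∀ j i, t (j, i) * t (j, i + 1) = 1 := by
    intro j i
    have h1 := congrFun (congrFun hXQ (j, i)) (j, i + 1)
    rw [hXd, Matrix.mul_diagonal, Matrix.diagonal_transpose, Matrix.diagonal_mul] at h1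
    simp only [auxQ, Matrix.of_apply, if_true] at h1
    have hκ : κ i ≠ 0 := fun h0 => by
      have : κ (i + -i) = 0 := by rw [AddChar.map_add_eq_mul, h0, zero_mul]
      simp at this
    apply mul_right_cancel₀ hκ
    linear_combination h1
  rw [hdet, hXd, Matrix.det_diagonal, Fintype.prod_prod_type]
  exact Finset.prod_eq_one fun j _ => aux_prod_one hm (fun i => t (j, i)) (htt j)

/-- weight vectors pair only with the shifted weights -/
theorem aux_orth {k : Type*} [Field k] {n : ℕ} (S x : Matrix (Fin n) (Fin n) k) (ω : k)
    (hx : xᵀ * S = ω • (S * x)) (s t : k) (z z' : Fin n → k) (hz : x *ᵥ z = s • z)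
    (hz' : x *ᵥ z' = t • z') (h : z ⬝ᵥ S *ᵥ z' ≠ 0) : s = ω * t := by
  have h1 : (x *ᵥ z) ⬝ᵥ S *ᵥ z' = ω * (z ⬝ᵥ S *ᵥ (x *ᵥ z')) := by
    rw [← Matrix.vecMul_transpose, ← Matrix.dotProduct_mulVec, Matrix.mulVec_mulVec, hx,
      Matrix.smul_mulVec, dotProduct_smul, Matrix.mulVec_mulVec, smul_eq_mul]
  rw [hz, hz', smul_dotProduct, Matrix.mulVec_smul, dotProduct_smul, smul_eq_mul, smul_eq_mul] at h1
  apply mul_right_cancel₀ h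
  linear_combination h1

theorem aux_string {k : Type*} [Field k] {n m m' : ℕ} [NeZero m] (hmm : m = 2 * m')
    (S A : Matrix (Fin n) (Fin n) k) (hSA : S * A = Sᵀ) (l ω μ : k) (hl : l * l = 1)
    (hA : A ^ m' = l • 1) (hω : ω⁻¹ ^ m = 1) (hω0 : ω ≠ 0) (hμ : μ ^ m = l)
    (hμ2 : (μ⁻¹ ^ 2) ^ m = 1)
    (c : Submodule k (Matrix (Fin n) (Fin n) k))
    (hc : ∀ x ∈ c, xᵀ * S = ω • (S * x))
    (hcA : ∀ x ∈ c, x * A = (ω⁻¹ ^ 2) • (A * x))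
    (hS : ∀ z : Fin n → k, z ≠ 0 → ∃ z', z ⬝ᵥ S *ᵥ z' ≠ 0)
    (hspan : Submodule.span k {z : Fin n → k | ∃ χ : c → k, ∀ x : c, x.1 *ᵥ z = χ x • z} = ⊤)
    (χ : c → k) (u0 : Fin n → k) (hu0 : u0 ≠ 0) (hχ : ∀ x : c, x.1 *ᵥ u0 = χ x • u0) :
    ∃ u : ZMod m → Fin n → k,
      (∀ (x : c) i, x.1 *ᵥ u i = (AddChar.zmodChar m hω i * χ x) • u i) ∧
      (∀ i, u i ⬝ᵥ S *ᵥ u (i + 1) = AddChar.zmodChar m hμ2 i) ∧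
      (∀ i, A *ᵥ u i = μ ^ 2 • u (i + 2)) := by
  have hl0 : l ≠ 0 := by rintro rfl; simp at hl
  have hμ0 : μ ≠ 0 := by
    rintro rfl; rw [zero_pow (NeZero.ne m)] at hμ; exact hl0 hμ.symm
  -- a partner weight vector
  obtain ⟨w0, ⟨ψ, hψ⟩, hw0⟩ : ∃ w0 : Fin n → k, (∃ ψ : c → k, ∀ x : c, x.1 *ᵥ w0 = ψ x • w0) ∧
      u0 ⬝ᵥ S *ᵥ w0 ≠ 0 := by
    by_contra! hcon
    obtain ⟨z', hz'⟩ := hS u0 hu0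
    apply hz'
    have : z' ∈ Submodule.span k {z : Fin n → k | ∃ χ : c → k, ∀ x : c, x.1 *ᵥ z = χ x • z} := by
      rw [hspan]; trivial
    induction this using Submodule.span_induction with
    | mem z hz => exact hcon z hz
    | zero => simp
    | add a b _ _ ha hb => rw [Matrix.mulVec_add, dotProduct_add]; 
                           by_cases h1 : u0 ⬝ᵥ S *ᵥ a = 0
                           · by_cases h2 : u0 ⬝ᵥ S *ᵥ b = 0
                             · rw [h1, h2, add_zero]
                             · exact absurd (hb h2) h2
                           · exact absurd (ha h1) h1
    | smul a b _ hb => rw [Matrix.mulVec_smul, dotProduct_smul]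
                       by_cases h2 : u0 ⬝ᵥ S *ᵥ b = 0
                       · rw [h2, smul_zero]
                       · exact absurd (hb h2) h2
  have hψχ : ∀ x : c, ψ x = ω⁻¹ * χ x := by
    intro x
    rw [aux_orth S x.1 ω (hc _ x.2) _ _ u0 w0 (hχ x) (hψ x) hw0, ← mul_assoc, inv_mul_cancel₀ hω0, one_mul]
  set q := u0 ⬝ᵥ S *ᵥ w0 with hq
  set w1 : Fin n → k := (μ * q⁻¹) • w0 with hw1
  have hw1wt : ∀ x : c, x.1 *ᵥ w1 = (ω⁻¹ * χ x) • w1 := by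
    intro x
    rw [hw1, Matrix.mulVec_smul, hψ, hψχ, smul_comm]
  have hu0w1 : u0 ⬝ᵥ S *ᵥ w1 = μ := by
    rw [hw1, Matrix.mulVec_smul, dotProduct_smul, ← hq, smul_eq_mul, mul_assoc, inv_mul_cancel₀ hw0, mul_one]
  set v : ℕ → Fin n → k := fun i => (A ^ (i / 2)) *ᵥ (if i % 2 = 0 then u0 else w1) with hv
  have hv2 : ∀ i, v (i + 2) = A *ᵥ v i := by
    intro i
    simp only [hv]
    rw [show (i + 2) / 2 = i / 2 + 1 by omega, show (i + 2) % 2 = i % 2 by omega, pow_succ',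
      Matrix.mulVec_mulVec]
  have hvm : ∀ i, v (i + m) = l • v i := by
    intro i
    simp only [hv]
    rw [show (i + m) / 2 = m' + i / 2 by omega, show (i + m) % 2 = i % 2 by omega, pow_add, hA,
      Matrix.smul_mul, Matrix.one_mul, Matrix.smul_mulVec]
  have hv0 : v 0 = u0 := by simp [hv]
  have hv1 : v 1 = w1 := by simp [hv]
  have hvwt : ∀ i, ∀ x : c, x.1 *ᵥ v i = (ω⁻¹ ^ i * χ x) • v i := by
    intro i
    induction i using Nat.strong_induction_on with
    | _ i ih =>
      intro x
      match i, ih with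
      | 0, _ => rw [hv0, hχ]; simp
      | 1, _ => rw [hv1, hw1wt]; simp
      | i + 2, ih =>
        rw [hv2, Matrix.mulVec_mulVec, hcA _ x.2, Matrix.smul_mulVec, ← Matrix.mulVec_mulVec,
          ih i (by omega), Matrix.mulVec_smul, smul_smul]
        congr 1; ring
  have hvA : ∀ z z' : Fin n → k, z ⬝ᵥ S *ᵥ (A *ᵥ z') = z' ⬝ᵥ S *ᵥ z := by
    intro z z'
    rw [Matrix.mulVec_mulVec, hSA, Matrix.mulVec_transpose, dotProduct_comm, Matrix.dotProduct_mulVec]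
  have hvv : ∀ i, v i ⬝ᵥ S *ᵥ v (i + 1) = μ := by
    intro i
    induction i with
    | zero => rw [hv0, zero_add, hv1, hu0w1]
    | succ i ih => rw [show i + 1 + 1 = i + 2 by ring, hv2, hvA, ih]
  set f : ℕ → Fin n → k := fun i => μ⁻¹ ^ i • v i with hf
  have hfm : ∀ i, f (i + m) = f i := by
    intro i
    simp only [hf]
    rw [hvm, smul_smul, pow_add]
    congr 1
    rw [inv_pow μ m, hμ, mul_assoc, inv_mul_cancel₀ hl0, mul_one]
  have hper : Function.Periodic f m := hfm
  set u : ZMod m → Fin n → k := fun i => f i.val with hu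
  have huf : ∀ i : ℕ, u (i : ZMod m) = f i := by
    intro i
    simp only [hu]
    rw [ZMod.val_natCast, hper.map_mod_nat]
  refine ⟨u, ?_, ?_, ?_⟩
  · intro x i
    rw [← ZMod.natCast_zmod_val i, huf, AddChar.zmodChar_apply']
    simp only [hf]
    rw [Matrix.mulVec_smul, hvwt, smul_comm]
  · intro i
    rw [← ZMod.natCast_zmod_val i]
    have : ((i.val : ZMod m) + 1) = ((i.val + 1 : ℕ) : ZMod m) := by push_cast; rfl
    rw [this, huf, huf, AddChar.zmodChar_apply']
    simp only [hf]
    rw [Matrix.mulVec_smul, smul_dotProduct, dotProduct_smul, hvv, smul_eq_mul, smul_eq_mul]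
    rw [← pow_mul, pow_succ, mul_assoc _ _ μ, inv_mul_cancel₀ hμ0]; ring
  · intro i
    rw [← ZMod.natCast_zmod_val i]
    have : ((i.val : ZMod m) + 2) = ((i.val + 2 : ℕ) : ZMod m) := by push_cast; rfl
    rw [this, huf, huf]
    simp only [hf]
    rw [Matrix.mulVec_smul, hv2, smul_smul]
    congr 1
    rw [pow_add, mul_comm (μ ^ 2), mul_assoc, ← mul_pow, inv_mul_cancel₀ hμ0]; simp

theorem aux_char_ne {k : Type*} [Field k] {m : ℕ} (e : AddChar (ZMod m) k) (i : ZMod m) :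
    e i ≠ 0 := fun h0 => by
  have : e (i + -i) = 0 := by rw [AddChar.map_add_eq_mul, h0, zero_mul]
  simp at this

theorem aux_frame {k : Type*} [Field k] {n m s : ℕ} [NeZero m]
    (S A : Matrix (Fin n) (Fin n) k) (hSA : S * A = Sᵀ) (ω μ : k) (hω0 : ω ≠ 0) (hμ0 : μ ≠ 0)
    (e κ : AddChar (ZMod m) k) (he1 : e 1 = ω⁻¹) (hκ1 : κ 1 = μ⁻¹ ^ 2) (hinj : Function.Injective e)
    (c : Submodule k (Matrix (Fin n) (Fin n) k))
    (hc : ∀ x ∈ c, xᵀ * S = ω • (S * x))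
    (χ : Fin s → c → k) (hχ0 : ∀ j, χ j ≠ 0)
    (hineq : ∀ i j, i ≠ j → ∀ a : ZMod m, χ i ≠ e a • χ j)
    (u : Fin s → ZMod m → Fin n → k)
    (h1 : ∀ j (x : c) i, x.1 *ᵥ u j i = (e i * χ j x) • u j i)
    (h2 : ∀ j i, u j i ⬝ᵥ S *ᵥ u j (i + 1) = κ i)
    (h3 : ∀ j i, A *ᵥ u j i = μ ^ 2 • u j (i + 2)) :
    ∃ (U : Matrix (Fin n) (Fin s × ZMod m) k) (U' : Matrix (Fin s × ZMod m) (Fin n) k),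
      U' * U = 1 ∧ Uᵀ * S = auxQ s κ * U' ∧ S * U = U'ᵀ * auxQ s κ ∧
      (∀ x : c, x.1 * U = U *
        (diagonal (fun p => e p.2 * χ p.1 x) : Matrix (Fin s × ZMod m) (Fin s × ZMod m) k)) ∧
      (∀ x : c, U' * x.1 =
        (diagonal (fun p => e p.2 * χ p.1 x) : Matrix (Fin s × ZMod m) (Fin s × ZMod m) k) * U') ∧
      (∀ p, (fun a => U a p) = u p.1 p.2) := by
  classical
  have horth : ∀ j i j' i', u j i ⬝ᵥ S *ᵥ u j' i' ≠ 0 → (j', i') = (j, i + 1) := by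
    intro j i j' i' hne
    have hx : ∀ x : c, e i * χ j x = ω * (e i' * χ j' x) := fun x =>
      aux_orth S x.1 ω (hc _ x.2) _ _ _ _ (h1 j x i) (h1 j' x i') hne
    have hx2 : χ j = e (i' - i - 1) • χ j' := by
      funext x
      have e1 : e (i' - i - 1) * (e i * e 1) = e i' := by
        rw [← AddChar.map_add_eq_mul, ← AddChar.map_add_eq_mul]; congr 1; ring
      rw [he1] at e1
      have e2 : e (i' - i - 1) * e i = ω * e i' := by
        rw [← e1]; field_simp
      rw [Pi.smul_apply, smul_eq_mul]
      apply mul_left_cancel₀ (aux_char_ne e i)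
      rw [hx]
      linear_combination (-χ j' x) * e2
    have hj : j = j' := by
      by_contra hne'
      exact hineq j j' hne' _ hx2
    subst hj
    have : e (i' - i - 1) = 1 := by
      obtain ⟨x, hx0⟩ := Function.ne_iff.1 (hχ0 j)
      have := congrFun hx2 x
      rw [Pi.smul_apply, smul_eq_mul] at this
      apply mul_right_cancel₀ hx0
      rw [← this, one_mul]
    have h0 : i' - i - 1 = 0 := hinj (by rw [this]; simp)
    have : i' = i + 1 := by linear_combination h0
    rw [this]
  have hSu : ∀ j i, S *ᵥ u j i = (μ⁻¹ ^ 2) • (u j (i - 2) ᵥ* S) := by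
    intro j i
    have e1 := h3 j (i - 2)
    rw [sub_add_cancel] at e1
    rw [← Matrix.mulVec_transpose, ← hSA, ← Matrix.mulVec_mulVec, e1, Matrix.mulVec_smul, smul_smul,
      ← mul_pow, inv_mul_cancel₀ hμ0, one_pow, one_smul]
  let U : Matrix (Fin n) (Fin s × ZMod m) k := Matrix.of fun a p => u p.1 p.2 a
  let U' : Matrix (Fin s × ZMod m) (Fin n) k :=
    Matrix.of fun p => (κ (p.2 - 1))⁻¹ • (u p.1 (p.2 - 1) ᵥ* S)
  refine ⟨U, U', ?_, ?_, ?_, ?_, ?_, ?_⟩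
  · ext p q
    have : (U' * U) p q = (κ (p.2 - 1))⁻¹ * (u p.1 (p.2 - 1) ⬝ᵥ S *ᵥ u q.1 q.2) := by
      rw [Matrix.dotProduct_mulVec, ← smul_eq_mul, ← smul_dotProduct]
      rfl
    rw [this]
    by_cases h : p = q
    · subst h
      have := h2 p.1 (p.2 - 1)
      rw [sub_add_cancel] at this
      rw [this, inv_mul_cancel₀ (aux_char_ne κ _)]; simp
    · rw [Matrix.one_apply_ne h]
      by_cases h0 : u p.1 (p.2 - 1) ⬝ᵥ S *ᵥ u q.1 q.2 = 0
      · rw [h0, mul_zero]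
      · exfalso
        have := horth _ _ _ _ h0
        rw [sub_add_cancel] at this
        exact h this.symm
  · ext p a
    have : (Uᵀ * S) p a = (u p.1 p.2 ᵥ* S) a := rfl
    rw [this, Matrix.mul_apply]
    simp only [auxQ, Matrix.of_apply, ite_mul, zero_mul, Finset.sum_ite_eq', Finset.mem_univ, if_true]
    simp only [U', Matrix.of_apply, Pi.smul_apply, smul_eq_mul, add_sub_cancel_right]
    rw [mul_inv_cancel_left₀ (aux_char_ne κ _)]
  · ext a q
    have : (S * U) a q = (S *ᵥ u q.1 q.2) a := rfl
    rw [this, Matrix.mul_apply, hSu, Finset.sum_eq_single (q.1, q.2 - 1)]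
    · simp only [auxQ, U', Matrix.of_apply, Matrix.transpose_apply, sub_add_cancel, Prod.mk.eta, if_true,
        Pi.smul_apply, smul_eq_mul]
      have e1 : κ (q.2 - 1) = κ (q.2 - 2) * κ 1 := by
        rw [← AddChar.map_add_eq_mul]; congr 1; ring
      have e2 : q.2 - 1 - 1 = q.2 - 2 := by ring
      have e3 := aux_char_ne κ (q.2 - 2)
      rw [e1, e2, hκ1]
      field_simp
    · intro p _ hp
      simp only [auxQ, Matrix.of_apply]
      rw [if_neg, mul_zero]
      rintro rfl
      apply hp
      simp
    · simp
  · intro x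
    ext a p
    rw [Matrix.mul_diagonal]
    have := congrFun (h1 p.1 x p.2) a
    rw [Pi.smul_apply, smul_eq_mul] at this
    rw [mul_comm]
    exact this
  · intro x
    ext p a
    rw [Matrix.diagonal_mul]
    have e0 : (U' * x.1) p a = (κ (p.2 - 1))⁻¹ * ((u p.1 (p.2 - 1) ᵥ* S) ᵥ* x.1) a := by
      have : (U' * x.1) p = ((κ (p.2 - 1))⁻¹ • (u p.1 (p.2 - 1) ᵥ* S)) ᵥ* x.1 := rfl
      rw [this, Matrix.smul_vecMul]; rfl
    have e1 : S * x.1 = ω⁻¹ • (x.1ᵀ * S) := by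
      rw [hc _ x.2, smul_smul, inv_mul_cancel₀ hω0, one_smul]
    have e2 : e (p.2 - 1) * e 1 = e p.2 := by
      rw [← AddChar.map_add_eq_mul]; congr 1; ring
    rw [he1] at e2
    rw [e0, Matrix.vecMul_vecMul, e1, Matrix.vecMul_smul, ← Matrix.vecMul_vecMul, Matrix.vecMul_transpose,
      h1, Matrix.smul_vecMul]
    simp only [U', Matrix.of_apply, Pi.smul_apply, smul_eq_mul]
    rw [← e2]; ring
  · intro p; rfl

theorem aux_DQ {k : Type*} [Field k] {m r : ℕ} [NeZero m] (ω : k) (hω0 : ω ≠ 0)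
    (e κ : AddChar (ZMod m) k) (he1 : e 1 = ω⁻¹) (j : Fin r) :
    diagonal (auxD e j) * auxQ r κ = ω • (auxQ r κ * diagonal (auxD e j)) := by
  ext p q
  rw [Matrix.diagonal_mul, Matrix.smul_apply, Matrix.mul_diagonal]
  simp only [auxQ, auxD, Matrix.of_apply, smul_eq_mul]
  by_cases h : q = (p.1, p.2 + 1)
  · subst h
    simp only [if_true, AddChar.map_add_eq_mul, he1]
    by_cases hj : p.1 = j
    · simp only [hj, if_true]; field_simp
    · simp [hj]
  · simp [h]

theorem aux_b {k : Type*} [Field k] {n m r : ℕ} [NeZero m] (ω : k) (hω0 : ω ≠ 0)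
    (S : Matrix (Fin n) (Fin n) k)
    (e κ : AddChar (ZMod m) k) (he1 : e 1 = ω⁻¹) (hem : ∀ i, e i ^ m = 1)
    (U : Matrix (Fin n) (Fin r × ZMod m) k) (U' : Matrix (Fin r × ZMod m) (Fin n) k)
    (hU : U' * U = 1) (hL : Uᵀ * S = auxQ r κ * U') (hR : S * U = U'ᵀ * auxQ r κ)
    (b : Fin r → Matrix (Fin n) (Fin n) k) (hb : ∀ j, b j = U * diagonal (auxD e j) * U') :
    (∀ j, (b j)ᵀ * S = ω • (S * b j)) ∧ (∀ j, b j ^ (m + 1) = b j) ∧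
    (∀ i j, i ≠ j → b i * b j = 0) ∧
    (∀ j, b j * U = U * diagonal (auxD e j)) := by
  classical
  have hUU : ∀ X : Matrix (Fin r × ZMod m) (Fin n) k, U' * (U * X) = X := by
    intro X; rw [← Matrix.mul_assoc, hU, Matrix.one_mul]
  refine ⟨?_, ?_, ?_, ?_⟩
  · intro j
    rw [hb, Matrix.transpose_mul, Matrix.transpose_mul, Matrix.diagonal_transpose, Matrix.mul_assoc,
      Matrix.mul_assoc, hL, ← Matrix.mul_assoc (diagonal _), aux_DQ ω hω0 e κ he1, Matrix.mul_assoc U,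
      ← Matrix.mul_assoc S U, hR]
    simp only [Matrix.smul_mul, Matrix.mul_smul, Matrix.mul_assoc]
  · intro j
    have hp : ∀ p : ℕ, b j ^ (p + 1) = U * diagonal (fun q => auxD e j q ^ (p + 1)) * U' := by
      intro p
      induction p with
      | zero => simp [hb]
      | succ p ih =>
        rw [pow_succ, ih, hb]
        simp only [Matrix.mul_assoc, hUU]
        rw [← Matrix.mul_assoc (diagonal _) (diagonal _), Matrix.diagonal_mul_diagonal]
        simp only [pow_succ]
    rw [hp, hb]
    congr 3
    funext q
    simp only [auxD]
    split_ifs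
    · rw [pow_succ, hem, one_mul]
    · simp
  · intro i j hij
    rw [hb, hb]
    simp only [Matrix.mul_assoc, hUU]
    rw [← Matrix.mul_assoc (diagonal _) (diagonal _), Matrix.diagonal_mul_diagonal]
    have : (fun q => auxD e i q * auxD e j q) = (fun _ => 0) := by
      funext q
      simp only [auxD]
      by_cases h : q.1 = i
      · have : ¬ q.1 = j := fun h' => hij (h.symm.trans h')
        simp [this]
      · simp [h]
    rw [this]; simp
  · intro j
    rw [hb, Matrix.mul_assoc, hU, Matrix.mul_one]

theorem aux_scalar {k : Type*} [Field k] {n m m' : ℕ} (hmm : m = 2 * m') (hn : 3 ≤ n)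
    (g : Matrix (Fin n) (Fin n) k) (hg : IsUnit g.det)
    (hordm : ∀ x : Matrix (Fin n) (Fin n) k, x.det = 1 →
      (fun y : Matrix (Fin n) (Fin n) k => g * (y.transpose)⁻¹ * g⁻¹)^[m] x = x) :
    (g * (g.transpose)⁻¹) ^ m' = 1 ∨ (g * (g.transpose)⁻¹) ^ m' = -1 := by
  classical
  set S := g⁻¹ with hS
  have hgS : g * S = 1 := Matrix.mul_nonsing_inv _ hg
  have hSg : S * g = 1 := Matrix.nonsing_inv_mul _ hg
  have hgt : (gᵀ)⁻¹ = Sᵀ := (Matrix.transpose_nonsing_inv g).symm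
  have hgSt : Sᵀ * gᵀ = 1 := by rw [← Matrix.transpose_mul, hgS, Matrix.transpose_one]
  have hSgt : gᵀ * Sᵀ = 1 := by rw [← Matrix.transpose_mul, hSg, Matrix.transpose_one]
  rw [hgt]
  set A := g * Sᵀ with hA
  set A' := gᵀ * S with hA'
  have hAA' : A * A' = 1 := by
    calc A * A' = g * (Sᵀ * gᵀ) * S := by simp only [hA, hA', mul_assoc]
      _ = 1 := by rw [hgSt, mul_one, hgS]
  have hA'A : A' * A = 1 := mul_eq_one_comm.1 hAA'
  set θ := (fun y : Matrix (Fin n) (Fin n) k => g * (y.transpose)⁻¹ * S) with hθ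
  have h2 : ∀ x : Matrix (Fin n) (Fin n) k, IsUnit x.det → θ (θ x) = A * x * A' := by
    intro x hx
    have hxx : x * x⁻¹ = 1 := Matrix.mul_nonsing_inv _ hx
    have hxx' : x⁻¹ * x = 1 := Matrix.nonsing_inv_mul _ hx
    have e1 : (θ x)ᵀ = Sᵀ * x⁻¹ * gᵀ := by
      simp only [hθ]
      rw [Matrix.transpose_mul, Matrix.transpose_mul, ← Matrix.transpose_nonsing_inv, Matrix.transpose_transpose,
        mul_assoc]
    have e2 : ((θ x)ᵀ)⁻¹ = Sᵀ * x * gᵀ := by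
      apply Matrix.inv_eq_right_inv
      rw [e1]
      calc Sᵀ * x⁻¹ * gᵀ * (Sᵀ * x * gᵀ) = Sᵀ * (x⁻¹ * (gᵀ * Sᵀ) * x) * gᵀ := by simp only [mul_assoc]
        _ = 1 := by rw [hSgt, mul_one, hxx', mul_one, hgSt]
    show g * ((θ x)ᵀ)⁻¹ * S = _
    rw [e2]
    simp only [hA, hA', mul_assoc]
  have h3 : ∀ p : ℕ, ∀ x : Matrix (Fin n) (Fin n) k, IsUnit x.det →
      (θ^[2])^[p] x = A ^ p * x * A' ^ p := by
    intro p
    induction p with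
    | zero => intro x _; simp
    | succ p ih =>
      intro x hx
      rw [Function.iterate_succ_apply]
      have : θ^[2] x = A * x * A' := h2 x hx
      rw [this, ih]
      · rw [pow_succ A, pow_succ' A']; simp only [mul_assoc]
      · rw [Matrix.det_mul, Matrix.det_mul]
        have u1 : IsUnit A.det := Matrix.isUnit_det_of_right_inverse hAA'
        have u2 : IsUnit A'.det := Matrix.isUnit_det_of_right_inverse hA'A
        exact (u1.mul hx).mul u2
  have hAp : ∀ p : ℕ, A' ^ p * A ^ p = 1 := by
    intro p
    have : Commute A' A := by show _ = _; rw [hA'A, hAA']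
    rw [← this.mul_pow, hA'A, one_pow]
  have hcomm : A ^ m' ∈ Set.range (Matrix.scalar (Fin n)) := by
    rw [Matrix.mem_range_scalar_iff_commute_transvectionStruct]
    intro t
    have e1 := hordm t.toMatrix t.det
    rw [hmm, Function.iterate_mul, h3 m' _ (by rw [t.det]; exact isUnit_one)] at e1
    show _ = _
    calc t.toMatrix * A ^ m' = (A ^ m' * t.toMatrix * A' ^ m') * A ^ m' := by rw [e1]
      _ = A ^ m' * t.toMatrix * (A' ^ m' * A ^ m') := by simp only [mul_assoc]
      _ = _ := by rw [hAp, mul_one]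
  obtain ⟨l, hl⟩ := hcomm
  have hAt : A'ᵀ * A'ᵀ ^ 0 = Sᵀ * g := by simp [hA', Matrix.transpose_mul]
  have hconj : ∀ p : ℕ, g * (Aᵀ) ^ p * S = A' ^ p := by
    intro p
    induction p with
    | zero => simp [hgS]
    | succ p ih =>
      rw [pow_succ, pow_succ, ← ih]
      have : Aᵀ = S * gᵀ := by rw [hA, Matrix.transpose_mul, Matrix.transpose_transpose]
      have e : g * Aᵀ ^ p * S * A' = g * Aᵀ ^ p * (S * gᵀ) * S := by simp only [hA', mul_assoc]
      rw [e, ← this]; simp only [mul_assoc]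
  have hl2 : l * l = 1 := by
    have e1 := hconj m'
    rw [← Matrix.transpose_pow, ← hl] at e1
    have e2 : (Matrix.scalar (Fin n) l)ᵀ = Matrix.scalar (Fin n) l := by simp
    rw [e2] at e1
    have e3 : g * Matrix.scalar (Fin n) l * S = Matrix.scalar (Fin n) l := by
      have := (Matrix.scalar_commute (n := Fin n) l (fun r' => mul_comm _ _) g)
      rw [← this.eq, mul_assoc, hgS, mul_one]
    rw [e3] at e1
    have e4 := hAp m'
    rw [← e1, ← hl, ← map_mul] at e4
    have := congrFun (congrFun e4 ⟨0, by omega⟩) ⟨0, by omega⟩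
    simpa using this
  rcases mul_self_eq_one_iff.1 hl2 with h | h
  · left; rw [← hl, h]; simp
  · right; rw [← hl, h, map_neg, map_one]

theorem aux_fix_iff {k : Type*} [Field k] {n : ℕ} (g h : Matrix (Fin n) (Fin n) k) (hg : IsUnit g.det)
    (hh : IsUnit h.det) : g * (h.transpose)⁻¹ * g⁻¹ = h ↔ hᵀ * g⁻¹ * h = g⁻¹ := by
  have hgS : g * g⁻¹ = 1 := Matrix.mul_nonsing_inv _ hg
  have hSg : g⁻¹ * g = 1 := Matrix.nonsing_inv_mul _ hg
  have hht : IsUnit hᵀ.det := by rwa [Matrix.det_transpose]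
  have h1 : hᵀ * (hᵀ)⁻¹ = 1 := Matrix.mul_nonsing_inv _ hht
  have h2 : (hᵀ)⁻¹ * hᵀ = 1 := Matrix.nonsing_inv_mul _ hht
  constructor
  · intro e
    calc hᵀ * g⁻¹ * h = hᵀ * g⁻¹ * (g * (hᵀ)⁻¹ * g⁻¹) := by rw [e]
      _ = hᵀ * (g⁻¹ * g) * (hᵀ)⁻¹ * g⁻¹ := by simp only [mul_assoc]
      _ = _ := by rw [hSg, mul_one, h1, one_mul]
  · intro e
    calc g * (hᵀ)⁻¹ * g⁻¹ = g * (hᵀ)⁻¹ * (hᵀ * g⁻¹ * h) := by rw [e]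
      _ = g * ((hᵀ)⁻¹ * hᵀ) * g⁻¹ * h := by simp only [mul_assoc]
      _ = _ := by rw [h2, mul_one, hgS, one_mul]

theorem aux_g1_iff {k : Type*} [Field k] {n : ℕ} (g x : Matrix (Fin n) (Fin n) k) (hg : IsUnit g.det)
    (ζ : k) : -(g * x.transpose * g⁻¹) = ζ • x ↔ xᵀ * g⁻¹ = (-ζ) • (g⁻¹ * x) := by
  have hgS : g * g⁻¹ = 1 := Matrix.mul_nonsing_inv _ hg
  have hSg : g⁻¹ * g = 1 := Matrix.nonsing_inv_mul _ hg
  constructor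
  · intro e
    have : g⁻¹ * (-(g * x.transpose * g⁻¹)) = g⁻¹ * ζ • x := by rw [e]
    rw [mul_neg, ← mul_assoc, ← mul_assoc, hSg, one_mul, mul_smul_comm] at this
    rw [neg_smul, ← this, neg_neg]
  · intro e
    rw [mul_assoc, e, mul_smul_comm, ← mul_assoc, hgS, one_mul, neg_smul, neg_neg]

theorem aux_cartan {k : Type*} [Field k] {n m m' : ℕ} [NeZero m] (hmm : m = 2 * m')
    (S A : Matrix (Fin n) (Fin n) k) (hSA : S * A = Sᵀ) (l ω μ : k) (hl : l * l = 1)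
    (hA : A ^ m' = l • 1) (hω : ω⁻¹ ^ m = 1) (hω0 : ω ≠ 0) (hμ : μ ^ m = l) (hμ0 : μ ≠ 0)
    (hμ2 : (μ⁻¹ ^ 2) ^ m = 1)
    (e κ : AddChar (ZMod m) k) (hee : e = AddChar.zmodChar m hω)
    (hκκ : κ = AddChar.zmodChar m hμ2)
    (he1 : e 1 = ω⁻¹) (hκ1 : κ 1 = μ⁻¹ ^ 2) (hinj : Function.Injective e)
    (hem : ∀ i, e i ^ m = 1)
    (c : Submodule k (Matrix (Fin n) (Fin n) k))
    (hc : ∀ x ∈ c, xᵀ * S = ω • (S * x))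
    (hcA : ∀ x ∈ c, x * A = (ω⁻¹ ^ 2) • (A * x))
    (hS : ∀ z : Fin n → k, z ≠ 0 → ∃ z', z ⬝ᵥ S *ᵥ z' ≠ 0)
    (hspan : Submodule.span k {z : Fin n → k | ∃ χ : c → k, ∀ x : c, x.1 *ᵥ z = χ x • z} = ⊤)
    (hmax : ∀ y, yᵀ * S = ω • (S * y) → y ^ (m + 1) = y → (∀ x ∈ c, x * y = y * x) → y ∈ c) :
    ∃ (s : ℕ) (U : Matrix (Fin n) (Fin s × ZMod m) k) (U' : Matrix (Fin s × ZMod m) (Fin n) k)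
      (b : Fin s → Matrix (Fin n) (Fin n) k),
      U' * U = 1 ∧ Uᵀ * S = auxQ s κ * U' ∧ S * U = U'ᵀ * auxQ s κ ∧
      (∀ j, b j = U * (diagonal (auxD e j) : Matrix (Fin s × ZMod m) (Fin s × ZMod m) k) * U') ∧
      LinearIndependent k b ∧ Submodule.span k (Set.range b) = c := by
  classical
  let P : ℕ → Prop := fun s => ∃ χ : Fin s → c → k, (∀ j, χ j ≠ 0) ∧
    (∀ j, ∃ z : Fin n → k, z ≠ 0 ∧ ∀ x : c, x.1 *ᵥ z = χ j x • z) ∧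
    (∀ i j, i ≠ j → ∀ a : ZMod m, χ i ≠ e a • χ j)
  have hframe : ∀ s (χ : Fin s → c → k), (∀ j, χ j ≠ 0) →
    (∀ j, ∃ z : Fin n → k, z ≠ 0 ∧ ∀ x : c, x.1 *ᵥ z = χ j x • z) →
    (∀ i j, i ≠ j → ∀ a : ZMod m, χ i ≠ e a • χ j) →
    ∃ (U : Matrix (Fin n) (Fin s × ZMod m) k) (U' : Matrix (Fin s × ZMod m) (Fin n) k),
      U' * U = 1 ∧ Uᵀ * S = auxQ s κ * U' ∧ S * U = U'ᵀ * auxQ s κ ∧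
      (∀ x : c, x.1 * U = U * (diagonal (fun p => e p.2 * χ p.1 x) :
        Matrix (Fin s × ZMod m) (Fin s × ZMod m) k)) ∧
      (∀ x : c, U' * x.1 = (diagonal (fun p => e p.2 * χ p.1 x) :
        Matrix (Fin s × ZMod m) (Fin s × ZMod m) k) * U') := by
    intro s χ h0 hz hi
    have := fun j => aux_string hmm S A hSA l ω μ hl hA hω hω0 hμ hμ2 c hc hcA hS hspan (χ j)
      (hz j).choose (hz j).choose_spec.1 (hz j).choose_spec.2
    choose u h1 h2 h3 using this
    subst hee hκκ
    obtain ⟨U, U', a1, a2, a3, a4, a5, -⟩ := aux_frame S A hSA ω μ hω0 hμ0 _ _ he1 hκ1 hinj c hc χ h0 hi u h1 h2 h3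
    exact ⟨U, U', a1, a2, a3, a4, a5⟩
  have hbound : ∀ s, P s → s ≤ n := by
    rintro s ⟨χ, h0, hz, hi⟩
    obtain ⟨U, U', hU, -⟩ := hframe s χ h0 hz hi
    have h1 : (U' * U).rank = s * m := by rw [hU, Matrix.rank_one]; simp [ZMod.card]
    have h2 : (U' * U).rank ≤ n := by
      refine (Matrix.rank_mul_le_right _ _).trans ?_
      simpa using Matrix.rank_le_card_height U
    have h3 : 0 < m := Nat.pos_of_ne_zero (NeZero.ne m)
    nlinarith
  have hP0 : P 0 := ⟨fun i => i.elim0, fun i => i.elim0, fun i => i.elim0, fun i => i.elim0⟩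
  have hPs : P (Nat.findGreatest P n) := Nat.findGreatest_spec (Nat.zero_le n) hP0
  have hPs1 : ¬ P (Nat.findGreatest P n + 1) := by
    intro h
    have := Nat.le_findGreatest (hbound _ h) h
    omega
  generalize Nat.findGreatest P n = s at hPs hPs1
  obtain ⟨χ, h0, hz, hi⟩ := hPs
  obtain ⟨U, U', hU, hL, hR, hxU, hxU'⟩ := hframe s χ h0 hz hi
  -- maximality
  have hwt : ∀ (ψ : c → k) (z : Fin n → k), z ≠ 0 → ψ ≠ 0 → (∀ x : c, x.1 *ᵥ z = ψ x • z) →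
      ∃ j a, ψ = e a • χ j := by
    intro ψ z hz0 hψ hzψ
    by_contra hcon
    push Not at hcon
    apply hPs1
    refine ⟨Fin.snoc (α := fun _ => c → k) χ ψ, ?_, ?_, ?_⟩
    · intro j
      refine Fin.lastCases ?_ (fun j => ?_) j
      · simpa using hψ
      · simpa using h0 j
    · intro j
      refine Fin.lastCases ?_ (fun j => ?_) j
      · refine ⟨z, hz0, fun x => ?_⟩; rw [Fin.snoc_last]; exact hzψ x
      · simpa using hz j
    · intro i j
      refine Fin.lastCases ?_ (fun j => ?_) j
      · refine Fin.lastCases ?_ (fun i => ?_) i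
        · simp
        · intro _ a
          rw [Fin.snoc_castSucc, Fin.snoc_last]
          intro h
          apply hcon i (-a)
          rw [h, smul_smul, ← AddChar.map_add_eq_mul]; simp
      · refine Fin.lastCases ?_ (fun i => ?_) i
        · intro _ a
          rw [Fin.snoc_castSucc, Fin.snoc_last]
          exact hcon j a
        · intro hij a
          rw [Fin.snoc_castSucc, Fin.snoc_castSucc]
          exact hi i j (fun h => hij (by rw [h])) a
  let b : Fin s → Matrix (Fin n) (Fin n) k := fun j =>
    U * (diagonal (auxD e j) : Matrix (Fin s × ZMod m) (Fin s × ZMod m) k) * U'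
  have hb : ∀ j, b j = U * (diagonal (auxD e j) : Matrix (Fin s × ZMod m) (Fin s × ZMod m) k) * U' :=
    fun j => rfl
  obtain ⟨hb1, hb2, hb3, hb4⟩ := aux_b ω hω0 S e κ he1 hem U U' hU hL hR b hb
  have hbc : ∀ j, b j ∈ c := by
    intro j
    apply hmax _ (hb1 j) (hb2 j)
    intro x hx
    rw [hb, ← Matrix.mul_assoc, ← Matrix.mul_assoc, hxU ⟨x, hx⟩, Matrix.mul_assoc _ U' x, hxU' ⟨x, hx⟩,
      ← Matrix.mul_assoc, Matrix.mul_assoc U _ (diagonal _), diagonal_mul_diagonal,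
      Matrix.mul_assoc U (diagonal (auxD e j)), diagonal_mul_diagonal]
    congr 3
    ext p; ring
  have hχb : ∀ j i, χ j ⟨b i, hbc i⟩ = if j = i then 1 else 0 := by
    intro j i
    have h1 := hxU ⟨b i, hbc i⟩
    have h2 := (hb4 i).symm.trans h1
    have h3 := congrArg (fun X => U' * X) h2
    simp only [← Matrix.mul_assoc, hU, Matrix.one_mul] at h3
    have h4 := congrFun (congrFun h3 (j, 0)) (j, 0)
    simp [auxD] at h4
    exact h4.symm
  have hbli : LinearIndependent k b := by
    rw [Fintype.linearIndependent_iff]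
    intro f hf j
    have h3 := congrArg (fun X => U' * (X * U)) hf
    simp only [Matrix.sum_mul, Matrix.mul_sum, Matrix.smul_mul, hb4, Matrix.mul_smul] at h3
    simp only [← Matrix.mul_assoc, hU, Matrix.one_mul] at h3
    have h4 := congrFun (congrFun h3 (j, 0)) (j, 0)
    simpa [Matrix.sum_apply, auxD] using h4
  refine ⟨s, U, U', b, hU, hL, hR, hb, hbli, ?_⟩
  apply le_antisymm
  · rw [Submodule.span_le]; rintro _ ⟨j, rfl⟩; exact hbc j
  · intro x hx
    have hxe : x = ∑ j, χ j ⟨x, hx⟩ • b j := by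
      have hlin : Matrix.mulVecLin x = Matrix.mulVecLin (∑ j, χ j ⟨x, hx⟩ • b j) := by
        apply LinearMap.ext_on hspan
        rintro z ⟨ψ, hψ⟩
        simp only [Matrix.mulVecLin_apply]
        rw [hψ ⟨x, hx⟩, Matrix.sum_mulVec]
        simp only [Matrix.smul_mulVec]
        have e1 : ∀ j, b j *ᵥ z = ψ ⟨b j, hbc j⟩ • z := fun j => hψ ⟨b j, hbc j⟩
        simp only [e1]
        by_cases hψ0 : ψ = 0
        · simp [hψ0]
        by_cases hz0 : z = 0
        · simp [hz0]
        obtain ⟨j, a, rfl⟩ := hwt ψ z hz0 hψ0 hψ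
        simp [hχb, smul_smul, mul_comm]
      exact Matrix.ext_of_mulVec_single fun i => congrArg (fun f => f (Pi.single i 1)) hlin
    rw [hxe]
    exact Submodule.sum_mem _ fun j _ => Submodule.smul_mem _ _ (Submodule.subset_span ⟨j, rfl⟩)

theorem aux_mono {k : Type*} [Field k] {n r : ℕ}
    (c : Submodule k (Matrix (Fin n) (Fin n) k)) (b : Fin r → Matrix (Fin n) (Fin n) k)
    (hbc : Submodule.span k (Set.range b) = c)
    (h : Matrix (Fin n) (Fin n) k) (hh : IsUnit h.det)
    (σ : Equiv.Perm (Fin r)) (w : Matrix (Fin r) (Fin r) k) (hw0 : ∀ i j, i ≠ σ j → w i j = 0)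
    (hw : ∀ j, w (σ j) j ≠ 0) (hb : ∀ j, h * b j = (w (σ j) j • b (σ j)) * h) :
    (∀ x ∈ c, h * x * h⁻¹ ∈ c) ∧ (∀ x ∈ c, h⁻¹ * x * h ∈ c) ∧
      ∀ j, h * b j * h⁻¹ = ∑ i, w i j • b i := by
  classical
  have h1 : h * h⁻¹ = 1 := Matrix.mul_nonsing_inv _ hh
  have h2 : h⁻¹ * h = 1 := Matrix.nonsing_inv_mul _ hh
  have e1 : ∀ j, h * b j * h⁻¹ = w (σ j) j • b (σ j) := by
    intro j; rw [hb, Matrix.mul_assoc, h1, Matrix.mul_one]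
  have e2 : ∀ j, h⁻¹ * b (σ j) * h = (w (σ j) j)⁻¹ • b j := by
    intro j
    have : b (σ j) * h = (w (σ j) j)⁻¹ • (h * b j) := by
      rw [hb, Matrix.smul_mul, smul_smul, inv_mul_cancel₀ (hw j), one_smul]
    rw [Matrix.mul_assoc, this, Matrix.mul_smul, ← Matrix.mul_assoc, h2, Matrix.one_mul]
  refine ⟨?_, ?_, ?_⟩
  · intro x hx
    rw [← hbc] at hx
    induction hx using Submodule.span_induction with
    | mem x hx =>
      obtain ⟨j, rfl⟩ := hx
      rw [e1, ← hbc]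
      exact Submodule.smul_mem _ _ (Submodule.subset_span ⟨_, rfl⟩)
    | zero => simp
    | add x y _ _ hx hy => rw [Matrix.mul_add, Matrix.add_mul]; exact c.add_mem hx hy
    | smul t x _ hx => rw [Matrix.mul_smul, Matrix.smul_mul]; exact c.smul_mem _ hx
  · intro x hx
    rw [← hbc] at hx
    induction hx using Submodule.span_induction with
    | mem x hx =>
      obtain ⟨j, rfl⟩ := hx
      obtain ⟨i, rfl⟩ := σ.surjective j
      rw [e2, ← hbc]
      exact Submodule.smul_mem _ _ (Submodule.subset_span ⟨_, rfl⟩)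
    | zero => simp
    | add x y _ _ hx hy => rw [Matrix.mul_add, Matrix.add_mul]; exact c.add_mem hx hy
    | smul t x _ hx => rw [Matrix.mul_smul, Matrix.smul_mul]; exact c.smul_mem _ hx
  · intro j
    rw [e1, Finset.sum_eq_single (σ j)]
    · intro i _ hi; rw [hw0 i j hi, zero_smul]
    · simp

theorem aux_mono_exists {k : Type*} [Field k] {n m m' r : ℕ} [NeZero m] (hmm : m = 2 * m')
    (S : Matrix (Fin n) (Fin n) k)
    (e κ : AddChar (ZMod m) k)
    (U : Matrix (Fin n) (Fin r × ZMod m) k) (U' : Matrix (Fin r × ZMod m) (Fin n) k)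
    (hU : U' * U = 1) (hL : Uᵀ * S = auxQ r κ * U') (hR : S * U = U'ᵀ * auxQ r κ)
    (l μ : k) (hμ : μ ^ m = l) (hκ : ∀ a : ZMod m, μ ^ a.val * μ ^ a.val * κ a = 1)
    (hsurj : ∀ t : k, t ^ m = 1 → ∃ a, e a = t) (hsgn : ∀ a, e a ^ m' = (-1) ^ a.val)
    (b : Fin r → Matrix (Fin n) (Fin n) k)
    (hb : ∀ j, b j = U * (diagonal (auxD e j) : Matrix (Fin r × ZMod m) (Fin r × ZMod m) k) * U')
    (σ : Equiv.Perm (Fin r)) (w : Matrix (Fin r) (Fin r) k)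
    (hw : ∀ j, w (σ j) j ^ m = 1) :
    ∃ h : Matrix (Fin n) (Fin n) k, hᵀ * S * h = S ∧ (l = -1 → h.det = 1) ∧
      (l = 1 → h.det = (∏ j, w (σ j) j) ^ m') ∧
      ∀ j, h * b j = (w (σ j) j • b (σ j)) * h := by
  choose a ha using fun j => hsurj _ (hw j)
  obtain ⟨h, h1, h2, h3⟩ := aux_hw ⟨m', by omega⟩ S e κ U U' hU hL hR μ hκ σ (fun j => -a j)
  rw [hμ] at h2
  have hev : ∀ j, ((-1 : k)) ^ (-a j).val = w (σ j) j ^ m' := by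
    intro j
    rw [← hsgn, ← ha, AddChar.map_neg_eq_inv, inv_pow, hsgn]
    rcases neg_one_pow_eq_or k (a j).val with h | h <;> rw [h] <;> norm_num
  refine ⟨h, h1, ?_, ?_, ?_⟩
  · rintro rfl; rw [h2]; simp
  · rintro rfl
    rw [h2, ← Finset.prod_pow, ← Finset.prod_pow_eq_pow_sum]
    exact Finset.prod_congr rfl fun j _ => hev j
  · intro j
    have := h3 j
    rw [neg_neg, ha, ← hb, ← hb] at this
    exact this

theorem aux_weyl {k : Type*} [Field k] {n m m' r : ℕ} [NeZero m] (hmm : m = 2 * m')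
    (h2k : (2 : k) ≠ 0)
    (S : Matrix (Fin n) (Fin n) k) (hS : IsUnit S.det)
    (e κ : AddChar (ZMod m) k) (hinj : Function.Injective e)
    (U : Matrix (Fin n) (Fin r × ZMod m) k) (U' : Matrix (Fin r × ZMod m) (Fin n) k)
    (hU : U' * U = 1) (hL : Uᵀ * S = auxQ r κ * U') (hR : S * U = U'ᵀ * auxQ r κ)
    (l μ : k) (hμ : μ ^ m = l) (hκ : ∀ a : ZMod m, μ ^ a.val * μ ^ a.val * κ a = 1)
    (hsurj : ∀ t : k, t ^ m = 1 → ∃ a, e a = t) (hsgn : ∀ a, e a ^ m' = (-1) ^ a.val)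
    (b : Fin r → Matrix (Fin n) (Fin n) k)
    (hb : ∀ j, b j = U * (diagonal (auxD e j) : Matrix (Fin r × ZMod m) (Fin r × ZMod m) k) * U')
    (hbb : ∀ i j, i ≠ j → b i * b j = 0) (hpow : ∀ j, b j ^ (m + 1) = b j)
    (hb0 : LinearIndependent k b)
    (c : Submodule k (Matrix (Fin n) (Fin n) k))
    (hbc : Submodule.span k (Set.range b) = c) :
    (l = -1 → littleWeylSet {h | h.det = 1 ∧ hᵀ * S * h = S} c b = GmqrSet k m 1 r) ∧
    (l = 1 →
      ((∃ x : Matrix (Fin n) (Fin n) k, x.det = -1 ∧ xᵀ * S * x = S ∧ ∀ y ∈ c, x * y = y * x) →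
        littleWeylSet {h | h.det = 1 ∧ hᵀ * S * h = S} c b = GmqrSet k m 1 r) ∧
      (¬ (n > m * r ∧
        ∃ x : Matrix (Fin n) (Fin n) k, x.det = -1 ∧ xᵀ * S * x = S ∧ ∀ y ∈ c, x * y = y * x) →
        littleWeylSet {h | h.det = 1 ∧ hᵀ * S * h = S} c b = GmqrSet k m 2 r)) := by
  classical
  have hm0 : m ≠ 0 := NeZero.ne m
  have hbmem : ∀ j, b j ∈ c := fun j => hbc ▸ Submodule.subset_span ⟨j, rfl⟩
  have hne : (1 : k) ≠ -1 := by
    intro h; apply h2k; linear_combination h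
  have hsub : littleWeylSet {h | h.det = 1 ∧ hᵀ * S * h = S} c b ⊆ GmqrSet k m 1 r := by
    rintro w ⟨h, ⟨hd, -⟩, -, -, hw⟩
    exact aux_W_sub (by omega) b hbb hpow hb0 h (by rw [hd]; exact isUnit_one) w hw
  have hex := aux_mono_exists hmm S e κ U U' hU hL hR l μ hμ hκ hsurj hsgn b hb
  have hnz : ∀ t : k, t ^ m = 1 → t ≠ 0 := by
    rintro t ht rfl; rw [zero_pow hm0] at ht; exact zero_ne_one ht
  have hsq : ∀ (σ : Equiv.Perm (Fin r)) (w : Matrix (Fin r) (Fin r) k), (∀ j, w (σ j) j ^ m = 1) →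
      (∏ j, w (σ j) j) ^ m' = 1 ∨ (∏ j, w (σ j) j) ^ m' = -1 := by
    intro σ w hw
    have : ((∏ j, w (σ j) j) ^ m') ^ 2 = 1 := by
      rw [← pow_mul, show m' * 2 = m by omega, ← Finset.prod_pow]
      exact Finset.prod_eq_one fun j _ => hw j
    have h5 : ((∏ j, w (σ j) j) ^ m' - 1) * ((∏ j, w (σ j) j) ^ m' + 1) = 0 := by
      linear_combination this
    rcases mul_eq_zero.1 h5 with h6 | h6
    · exact Or.inl (sub_eq_zero.1 h6)
    · exact Or.inr (eq_neg_of_add_eq_zero_left h6)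
  refine ⟨?_, ?_⟩
  · intro hl
    refine Set.Subset.antisymm hsub ?_
    rintro w ⟨σ, hw0, hw, -⟩
    obtain ⟨h, h1, h2, -, h3⟩ := hex σ w hw
    refine ⟨h, ⟨h2 hl, h1⟩, aux_mono c b hbc h (by rw [h2 hl]; exact isUnit_one) σ w hw0
      (fun j => hnz _ (hw j)) h3⟩
  · intro hl
    refine ⟨?_, ?_⟩
    · rintro ⟨x, hxd, hxS, hxc⟩
      refine Set.Subset.antisymm hsub ?_
      rintro w ⟨σ, hw0, hw, -⟩
      obtain ⟨h, h1, -, h2, h3⟩ := hex σ w hw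
      have h2 := h2 hl
      rcases hsq σ w hw with hp | hp
      · rw [hp] at h2
        exact ⟨h, ⟨h2, h1⟩, aux_mono c b hbc h (by rw [h2]; exact isUnit_one) σ w hw0
          (fun j => hnz _ (hw j)) h3⟩
      · rw [hp] at h2
        have hd : (h * x).det = 1 := by rw [Matrix.det_mul, h2, hxd]; ring
        refine ⟨h * x, ⟨hd, ?_⟩, aux_mono c b hbc (h * x) (by rw [hd]; exact isUnit_one) σ w hw0
          (fun j => hnz _ (hw j)) ?_⟩
        · rw [Matrix.transpose_mul]
          calc xᵀ * hᵀ * S * (h * x) = xᵀ * (hᵀ * S * h) * x := by simp only [Matrix.mul_assoc]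
            _ = S := by rw [h1, hxS]
        · intro j
          rw [Matrix.mul_assoc, hxc _ (hbmem j), ← Matrix.mul_assoc, h3, Matrix.mul_assoc]
    · intro hno
      refine Set.Subset.antisymm ?_ ?_
      · intro w hwW
        obtain ⟨σ, hw0, hw, -⟩ := hsub hwW
        refine ⟨σ, hw0, hw, ?_⟩
        rw [show m / 2 = m' by omega]
        rcases hsq σ w hw with hp | hp
        · exact hp
        exfalso
        obtain ⟨h, ⟨hd, hhS⟩, -, -, hwh⟩ := hwW
        obtain ⟨y, h1, -, h2, h3⟩ := hex σ w hw
        have h2 := h2 hl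
        rw [hp] at h2
        have hyu : IsUnit y.det := by rw [h2]; exact isUnit_one.neg
        have hhu : IsUnit h.det := by rw [hd]; exact isUnit_one
        have y1 : y * y⁻¹ = 1 := Matrix.mul_nonsing_inv _ hyu
        have y2 : y⁻¹ * y = 1 := Matrix.nonsing_inv_mul _ hyu
        have hh2 : h⁻¹ * h = 1 := Matrix.nonsing_inv_mul _ hhu
        have hxd : (y⁻¹ * h).det = -1 := by
          rw [Matrix.det_mul, Matrix.det_nonsing_inv, hd, h2, Ring.inverse_eq_inv', inv_neg, inv_one, mul_one]
        have hySi : y⁻¹ᵀ * S * y⁻¹ = S := by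
          have yt : y⁻¹ᵀ * yᵀ = 1 := by rw [← Matrix.transpose_mul, y1, Matrix.transpose_one]
          calc y⁻¹ᵀ * S * y⁻¹ = y⁻¹ᵀ * (yᵀ * S * y) * y⁻¹ := by rw [h1]
            _ = (y⁻¹ᵀ * yᵀ) * S * (y * y⁻¹) := by simp only [Matrix.mul_assoc]
            _ = S := by rw [yt, y1, Matrix.one_mul, Matrix.mul_one]
        have hxS : (y⁻¹ * h)ᵀ * S * (y⁻¹ * h) = S := by
          rw [Matrix.transpose_mul]
          calc hᵀ * y⁻¹ᵀ * S * (y⁻¹ * h) = hᵀ * (y⁻¹ᵀ * S * y⁻¹) * h := by simp only [Matrix.mul_assoc]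
            _ = S := by rw [hySi, hhS]
        have hhb : ∀ j, h * b j = (w (σ j) j • b (σ j)) * h := by
          intro j
          have h5 := hwh j
          rw [Finset.sum_eq_single (σ j) (fun i _ hi => by rw [hw0 i j hi, zero_smul]) (by simp)] at h5
          rw [← h5, Matrix.mul_assoc, hh2, Matrix.mul_one]
        have hxb : ∀ j, (y⁻¹ * h) * b j = b j * (y⁻¹ * h) := by
          intro j
          have h6 : b j * y⁻¹ = y⁻¹ * (w (σ j) j • b (σ j)) := by
            calc b j * y⁻¹ = y⁻¹ * y * b j * y⁻¹ := by rw [y2, Matrix.one_mul]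
              _ = y⁻¹ * (y * b j) * y⁻¹ := by simp only [Matrix.mul_assoc]
              _ = y⁻¹ * (w (σ j) j • b (σ j)) * (y * y⁻¹) := by rw [h3]; simp only [Matrix.mul_assoc]
              _ = _ := by rw [y1, Matrix.mul_one]
          rw [Matrix.mul_assoc, hhb, ← Matrix.mul_assoc, ← h6, Matrix.mul_assoc]
        apply hno
        refine ⟨?_, y⁻¹ * h, hxd, hxS, ?_⟩
        · by_contra hn
          have hb' : ∀ j, (y⁻¹ * h) * (U * (diagonal (auxD e j) : Matrix (Fin r × ZMod m) (Fin r × ZMod m) k) * U') =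
              (U * (diagonal (auxD e j) : Matrix (Fin r × ZMod m) (Fin r × ZMod m) k) * U') * (y⁻¹ * h) := by
            intro j; rw [← hb]; exact hxb j
          have := aux_det_one ⟨m', by omega⟩ S e κ hinj U U' hU hL (by omega) _ hxS hb'
          rw [hxd] at this
          exact hne this.symm
        · intro z hz
          rw [← hbc] at hz
          induction hz using Submodule.span_induction with
          | mem x hx => obtain ⟨j, rfl⟩ := hx; exact hxb j
          | zero => simp
          | add x y _ _ hx hy => rw [Matrix.mul_add, Matrix.add_mul, hx, hy]
          | smul t x _ hx => rw [Matrix.mul_smul, Matrix.smul_mul, hx]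
      · rintro w ⟨σ, hw0, hw, hp⟩
        rw [show m / 2 = m' by omega] at hp
        obtain ⟨h, h1, -, h2, h3⟩ := hex σ w hw
        have h2 := h2 hl
        rw [hp] at h2
        exact ⟨h, ⟨h2, h1⟩, aux_mono c b hbc h (by rw [h2]; exact isUnit_one) σ w hw0
          (fun j => hnz _ (hw j)) h3⟩

/-- little Weyl group of an outer automorphism
`θ(x) = g·(ᵀx)⁻¹·g⁻¹` of `SL(n,k)` of order exactly `m` with `m/2` even.
Then `(g·(ᵀg)⁻¹)^{m/2} = ±I`; if it is `-I` the little Weyl group (with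
respect to a suitable basis of a Cartan subspace `c` of dimension `r`) is
`G(m,1,r)`; if it is `I`, it is `G(m,1,r)` when `n > mr` and some
`θ`-fixed `x ∈ GL(n,k)` of determinant `-1` commutes with every element of
`c`, and `G(m,2,r)` otherwise. -/
theorem stmt16 {k : Type*} [Field k] [IsAlgClosed k]
    (hchar : ringChar k = 0 ∨ 2 < ringChar k)
    (m : ℕ) (hm : 0 < m) (hmchar : ¬ (ringChar k ∣ m))
    (ζ : k) (hζ : IsPrimitiveRoot ζ m)
    (n : ℕ) (hn : 3 ≤ n) (hnchar : ¬ (ringChar k ∣ n))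
    (g : Matrix (Fin n) (Fin n) k) (hg : IsUnit g.det)
    (hordm : ∀ x : Matrix (Fin n) (Fin n) k, x.det = 1 →
      (fun y : Matrix (Fin n) (Fin n) k => g * (y.transpose)⁻¹ * g⁻¹)^[m] x = x)
    (hordleast : ∀ j : ℕ, 0 < j → j < m →
      ∃ x : Matrix (Fin n) (Fin n) k, x.det = 1 ∧
        (fun y : Matrix (Fin n) (Fin n) k => g * (y.transpose)⁻¹ * g⁻¹)^[j] x ≠ x)
    (hmeven : Even m) (hm2even : Even (m / 2))
    (c : Submodule k (Matrix (Fin n) (Fin n) k))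
    (hc : IsCartanSubspace
      {x | x.trace = 0 ∧ -(g * x.transpose * g⁻¹) = ζ • x} c)
    (r : ℕ) (hr : Module.finrank k c = r) :
    ((g * (g.transpose)⁻¹) ^ (m / 2) = 1 ∨ (g * (g.transpose)⁻¹) ^ (m / 2) = -1) ∧
    ∃ b : Fin r → Matrix (Fin n) (Fin n) k,
      LinearIndependent k b ∧ Submodule.span k (Set.range b) = c ∧
      ((g * (g.transpose)⁻¹) ^ (m / 2) = -1 →
        littleWeylSet {h | h.det = 1 ∧ g * (h.transpose)⁻¹ * g⁻¹ = h} c b =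
          GmqrSet k m 1 r) ∧
      ((g * (g.transpose)⁻¹) ^ (m / 2) = 1 →
        ((n > m * r ∧ ∃ x : Matrix (Fin n) (Fin n) k, x.det = -1 ∧
            g * (x.transpose)⁻¹ * g⁻¹ = x ∧ ∀ y ∈ c, x * y = y * x) →
          littleWeylSet {h | h.det = 1 ∧ g * (h.transpose)⁻¹ * g⁻¹ = h} c b =
            GmqrSet k m 1 r) ∧
        (¬ (n > m * r ∧ ∃ x : Matrix (Fin n) (Fin n) k, x.det = -1 ∧
            g * (x.transpose)⁻¹ * g⁻¹ = x ∧ ∀ y ∈ c, x * y = y * x) →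
          littleWeylSet {h | h.det = 1 ∧ g * (h.transpose)⁻¹ * g⁻¹ = h} c b =
            GmqrSet k m 2 r)) := by
  classical
  obtain ⟨m', hmm⟩ : ∃ m', m = 2 * m' := ⟨m / 2, by obtain ⟨q, hq⟩ := hmeven; omega⟩
  have hm' : m / 2 = m' := by omega
  have hm4 : 4 ≤ m := by obtain ⟨q, hq⟩ := hm2even; omega
  haveI : NeZero m := ⟨by omega⟩
  have hmk : (m : k) ≠ 0 := fun h => hmchar ((ringChar.spec k m).1 h)
  have h2k : (2 : k) ≠ 0 := by
    intro h
    apply hmk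
    rw [hmm]; push_cast; rw [h, zero_mul]
  have hne : (1 : k) ≠ -1 := by
    intro h; apply h2k; linear_combination h
  rw [hm'] at hm2even ⊢
  have hscal := aux_scalar hmm hn g hg hordm
  refine ⟨hscal, ?_⟩
  obtain ⟨hcg, hcomm, hcss, hcmax⟩ := hc
  -- the root of unity
  have hζ0 : ζ ≠ 0 := hζ.ne_zero (by omega)
  have hζm' : ζ ^ m' = -1 := by
    have h1 : (ζ ^ m' - 1) * (ζ ^ m' + 1) = 0 := by
      have h3 := hζ.pow_eq_one
      rw [hmm, mul_comm, pow_mul] at h3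
      linear_combination h3
    rcases mul_eq_zero.1 h1 with h | h
    · exact absurd (sub_eq_zero.1 h) (hζ.pow_ne_one_of_pos_of_lt (by omega) (by omega))
    · exact eq_neg_of_add_eq_zero_left h
  have hωp : IsPrimitiveRoot (-ζ) m := by
    have : -ζ = ζ ^ (1 + m') := by rw [pow_add, hζm', pow_one]; ring
    rw [this]
    apply hζ.pow_of_coprime
    obtain ⟨q, hq⟩ := hm2even
    rw [hmm]
    apply Nat.Coprime.mul_right
    · rw [Nat.coprime_two_right, Nat.odd_iff]; omega
    · simp
  have hηp : IsPrimitiveRoot (-ζ)⁻¹ m := hωp.inv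
  have hω0 : -ζ ≠ 0 := neg_ne_zero.2 hζ0
  have hω : (-ζ)⁻¹ ^ m = 1 := hηp.pow_eq_one
  have hηm' : (-ζ)⁻¹ ^ m' = -1 := by
    rw [inv_pow, hm2even.neg_pow, hζm']; norm_num
  -- the scalar
  obtain ⟨l, hl, hl1⟩ : ∃ l : k, l * l = 1 ∧ (g * (g.transpose)⁻¹) ^ m' = l • 1 := by
    rcases hscal with h | h
    · exact ⟨1, by ring, by rw [h, one_smul]⟩
    · exact ⟨-1, by ring, by rw [h, neg_smul, one_smul]⟩
  obtain ⟨μ, hμ⟩ := IsAlgClosed.exists_pow_nat_eq l hm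
  have hl0 : l ≠ 0 := by rintro rfl; simp at hl
  have hμ0 : μ ≠ 0 := by
    rintro rfl; rw [zero_pow (by omega)] at hμ; exact hl0 hμ.symm
  have hμ2 : (μ⁻¹ ^ 2) ^ m = 1 := by
    rw [← pow_mul, mul_comm, pow_mul, inv_pow, hμ, inv_pow, sq, hl, inv_one]
  obtain ⟨e, hee⟩ : ∃ e, e = AddChar.zmodChar m hω := ⟨_, rfl⟩
  obtain ⟨κ, hκκ⟩ : ∃ e, e = AddChar.zmodChar m hμ2 := ⟨_, rfl⟩
  have hea : ∀ a, e a = (-ζ)⁻¹ ^ a.val := fun a => by rw [hee, AddChar.zmodChar_apply]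
  have hκa : ∀ a, κ a = (μ⁻¹ ^ 2) ^ a.val := fun a => by rw [hκκ, AddChar.zmodChar_apply]
  haveI : Fact (1 < m) := ⟨by omega⟩
  have he1 : e 1 = (-ζ)⁻¹ := by rw [hea, ZMod.val_one, pow_one]
  have hκ1 : κ 1 = μ⁻¹ ^ 2 := by rw [hκa, ZMod.val_one, pow_one]
  have hinj : Function.Injective e := by
    intro a b hab
    rw [hea, hea] at hab
    exact ZMod.val_injective m (hηp.pow_inj (ZMod.val_lt a) (ZMod.val_lt b) hab)
  have hem : ∀ i, e i ^ m = 1 := by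
    intro i; rw [hea, ← pow_mul, mul_comm, pow_mul, hω, one_pow]
  have hsgn : ∀ a, e a ^ m' = (-1) ^ a.val := by
    intro i; rw [hea, ← pow_mul, mul_comm, pow_mul, hηm']
  have hsurj : ∀ t : k, t ^ m = 1 → ∃ a, e a = t := by
    intro t ht
    obtain ⟨i, hi, rfl⟩ := hηp.eq_pow_of_pow_eq_one ht
    exact ⟨(i : ZMod m), by rw [hea, ZMod.val_cast_of_lt hi]⟩
  have hκ : ∀ a : ZMod m, μ ^ a.val * μ ^ a.val * κ a = 1 := by
    intro a
    rw [hκa, ← mul_pow, ← mul_pow, show μ * μ * μ⁻¹ ^ 2 = 1 by field_simp, one_pow]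
  -- the form
  have hgS : g * g⁻¹ = 1 := Matrix.mul_nonsing_inv _ hg
  have hSg : g⁻¹ * g = 1 := Matrix.nonsing_inv_mul _ hg
  have hSu : IsUnit g⁻¹.det := Matrix.isUnit_nonsing_inv_det g hg
  have hSgt : gᵀ * g⁻¹ᵀ = 1 := by rw [← Matrix.transpose_mul, hSg, Matrix.transpose_one]
  have hgt : (gᵀ)⁻¹ = g⁻¹ᵀ := (Matrix.transpose_nonsing_inv g).symm
  have hSA : g⁻¹ * (g * (gᵀ)⁻¹) = g⁻¹ᵀ := by rw [← Matrix.mul_assoc, hSg, Matrix.one_mul, hgt]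
  have hcS : ∀ x ∈ c, xᵀ * g⁻¹ = (-ζ) • (g⁻¹ * x) := fun x hx =>
    (aux_g1_iff g x hg ζ).1 (hcg hx).2
  have hcA : ∀ x ∈ c, x * (g * (gᵀ)⁻¹) = ((-ζ)⁻¹ ^ 2) • ((g * (gᵀ)⁻¹) * x) := by
    intro x hx
    have h1 := hcS x hx
    -- `x g = ω⁻¹ g xᵀ`
    have h2 : g * xᵀ = (-ζ) • (x * g) := by
      have h3 := congrArg (fun X => g * X * g) h1
      simp only [Matrix.mul_smul, Matrix.smul_mul] at h3
      calc g * xᵀ = g * (xᵀ * g⁻¹) * g := by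
            rw [Matrix.mul_assoc, Matrix.mul_assoc, hSg, Matrix.mul_one]
        _ = (-ζ) • (g * (g⁻¹ * x) * g) := h3
        _ = _ := by rw [← Matrix.mul_assoc, hgS, Matrix.one_mul]
    have h4 : g⁻¹ᵀ * x = (-ζ) • (xᵀ * g⁻¹ᵀ) := by
      have h3 := congrArg Matrix.transpose h1
      rw [Matrix.transpose_mul, Matrix.transpose_smul, Matrix.transpose_mul, Matrix.transpose_transpose] at h3
      exact h3
    rw [hgt, Matrix.mul_assoc g, h4, Matrix.mul_smul, ← Matrix.mul_assoc g, h2, Matrix.smul_mul,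
      smul_smul, smul_smul, Matrix.mul_assoc]
    rw [show (-ζ)⁻¹ ^ 2 * -ζ * -ζ = 1 by field_simp, one_smul]
  have hSn : ∀ z : Fin n → k, z ≠ 0 → ∃ z', z ⬝ᵥ g⁻¹ *ᵥ z' ≠ 0 := by
    intro z hz
    obtain ⟨i, hi⟩ := Function.ne_iff.1 hz
    refine ⟨g *ᵥ Pi.single i 1, ?_⟩
    rw [Matrix.mulVec_mulVec, hSg, Matrix.one_mulVec]
    simpa using hi
  have hspan := aux_weights c hcomm hcss
  have hmax : ∀ y, yᵀ * g⁻¹ = (-ζ) • (g⁻¹ * y) → y ^ (m + 1) = y → (∀ x ∈ c, x * y = y * x) → y ∈ c := by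
    intro y hy hyp hyc
    have hg1 : ∀ x : Matrix (Fin n) (Fin n) k, xᵀ * g⁻¹ = (-ζ) • (g⁻¹ * x) →
        x.trace = 0 ∧ -(g * x.transpose * g⁻¹) = ζ • x := by
      intro x hx
      have h1 := (aux_g1_iff g x hg ζ).2 hx
      refine ⟨?_, h1⟩
      have h2 := congrArg Matrix.trace h1
      rw [Matrix.trace_neg, Matrix.trace_smul, Matrix.trace_mul_comm, ← Matrix.mul_assoc, hSg, Matrix.one_mul,
        Matrix.trace_transpose, smul_eq_mul] at h2
      have h3 : (1 + ζ) * x.trace = 0 := by linear_combination -h2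
      rcases mul_eq_zero.1 h3 with h | h
      · exfalso
        have h5 : ζ ^ 2 = 1 := by
          rw [show ζ = -1 by linear_combination h]; ring
        exact hζ.pow_ne_one_of_pos_of_lt (by omega) (by omega) h5
      · exact h
    have hmem : ∀ z ∈ c ⊔ Submodule.span k {y}, ∃ x ∈ c, ∃ t : k, z = x + t • y := by
      intro z hz
      obtain ⟨x, hx, y', hy', rfl⟩ := Submodule.mem_sup.1 hz
      obtain ⟨t, rfl⟩ := Submodule.mem_span_singleton.1 hy'
      exact ⟨x, hx, t, rfl⟩
    have := hcmax (c ⊔ Submodule.span k {y}) ⟨?_, ?_, ?_⟩ le_sup_left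
    · rw [← this]
      exact Submodule.mem_sup_right (Submodule.mem_span_singleton_self y)
    · intro z hz
      obtain ⟨x, hx, t, rfl⟩ := hmem z hz
      apply hg1
      rw [Matrix.transpose_add, Matrix.transpose_smul, Matrix.add_mul, Matrix.smul_mul, hcS x hx, hy,
        Matrix.mul_add, Matrix.mul_smul, smul_add, smul_comm t]
    · intro z hz z' hz'
      obtain ⟨x, hx, t, rfl⟩ := hmem z hz
      obtain ⟨x', hx', t', rfl⟩ := hmem z' hz'
      simp only [Matrix.mul_add, Matrix.add_mul, Matrix.mul_smul, Matrix.smul_mul, hcomm x hx x' hx',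
        hyc x hx, hyc x' hx', smul_add]
      rw [smul_comm t t']
      abel
    · intro z hz
      obtain ⟨x, hx, t, rfl⟩ := hmem z hz
      exact aux_ss_add x y (hcss x hx) (hyc x hx) m hmk hyp t
  obtain ⟨s, U, U', b, hU, hL, hR, hb, hbli, hbc⟩ := aux_cartan hmm g⁻¹ (g * (gᵀ)⁻¹) hSA l (-ζ) μ hl
    hl1 hω hω0 hμ hμ0 hμ2 e κ hee hκκ he1 hκ1 hinj hem c hcS hcA hSn hspan hmax
  have hs : s = r := by
    rw [← hr, ← hbc, finrank_span_eq_card hbli, Fintype.card_fin]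
  subst hs
  obtain ⟨-, hb2, hb3, -⟩ := aux_b (-ζ) hω0 g⁻¹ e κ he1 hem U U' hU hL hR b hb
  have hW := aux_weyl hmm h2k g⁻¹ hSu e κ hinj U U' hU hL hR l μ hμ hκ hsurj hsgn b hb hb3 hb2 hbli c hbc
  have hH : {h : Matrix (Fin n) (Fin n) k | h.det = 1 ∧ g * (h.transpose)⁻¹ * g⁻¹ = h} =
      {h | h.det = 1 ∧ hᵀ * g⁻¹ * h = g⁻¹} := by
    ext h
    simp only [Set.mem_setOf_eq]
    refine and_congr_right fun hd => aux_fix_iff g h hg (by rw [hd]; exact isUnit_one)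
  have hX : (∃ x : Matrix (Fin n) (Fin n) k, x.det = -1 ∧
      g * (x.transpose)⁻¹ * g⁻¹ = x ∧ ∀ y ∈ c, x * y = y * x) ↔
      ∃ x : Matrix (Fin n) (Fin n) k, x.det = -1 ∧ xᵀ * g⁻¹ * x = g⁻¹ ∧ ∀ y ∈ c, x * y = y * x := by
    refine exists_congr fun x => and_congr_right fun hd => ?_
    rw [aux_fix_iff g x hg (by rw [hd]; exact isUnit_one.neg)]
  have hn0 : ∀ t : k, (t • (1 : Matrix (Fin n) (Fin n) k)) = 1 → t = 1 := by
    intro t ht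
    have := congrFun (congrFun ht ⟨0, by omega⟩) ⟨0, by omega⟩
    simpa using this
  refine ⟨b, hbli, hbc, ?_, ?_⟩
  · intro h
    rw [hH]
    apply hW.1
    rw [hl1] at h
    have := hn0 (-l) (by rw [neg_smul, h, neg_neg])
    linear_combination -this
  · intro h
    rw [hH, hX]
    rw [hl1] at h
    have := hW.2 (hn0 l h)
    exact ⟨fun hx => this.1 hx.2, this.2⟩
end

section
/- Let k be a field containing a primitive m-th root of unity (so the characteristic of k does not divide m), and let m, r be positive integers. Let W = G(m,1,r) ⊆ GL(r,k) be the group of r×r monomial matrices whose nonzero entries are m-th roots of unity, acting on the polynomial algebra k[x₁,…,x_r] by linear substitutions. Then the invariant algebra k[x₁,…,x_r]^W equals the k-subalgebra generated by the r polynomials e_j(x₁^m, …, x_r^m) for j = 1, …, r, where e_j is the j-th elementary symmetric polynomial; moreover these r generators are algebraically independent over k, so the invariant algebra is a polynomial ring in r variables. -/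
/-- The linear substitution action of a matrix `w` on polynomials:
`x_i ↦ ∑_j w_{ij} x_j`. -/
noncomputable def substAct {k : Type*} [Field k] {r : ℕ}
    (w : Matrix (Fin r) (Fin r) k) :
    MvPolynomial (Fin r) k →ₐ[k] MvPolynomial (Fin r) k :=
  MvPolynomial.aeval fun i => ∑ j : Fin r, MvPolynomial.C (w i j) * MvPolynomial.X j

/-- The polynomial `e_j(x₁^m, …, x_r^m)` — the `j`-th elementary symmetric
polynomial evaluated at the `m`-th powers of the variables. -/
noncomputable def powerEsymm (k : Type*) [Field k] (r m j : ℕ) :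
    MvPolynomial (Fin r) k :=
  MvPolynomial.aeval (fun i : Fin r => (MvPolynomial.X i : MvPolynomial (Fin r) k) ^ m)
    (MvPolynomial.esymm (Fin r) k j)

open MvPolynomial

lemma substAct_X {k : Type*} [Field k] {r : ℕ} (w : Matrix (Fin r) (Fin r) k)
    (σ : Equiv.Perm (Fin r)) (h : ∀ i j, i ≠ σ j → w i j = 0) (i : Fin r) :
    substAct w (X i) = C (w i (σ.symm i)) * X (σ.symm i) := by
  rw [substAct, aeval_X]
  refine Finset.sum_eq_single _ (fun j _ hj => ?_) (by simp)
  rw [h i j (fun e => hj (by simp [e]))]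
  simp

lemma substAct_expand {k : Type*} [Field k] {m r : ℕ} (w : Matrix (Fin r) (Fin r) k)
    (σ : Equiv.Perm (Fin r)) (h : ∀ i j, i ≠ σ j → w i j = 0) (h1 : ∀ j, w (σ j) j ^ m = 1)
    (φ : MvPolynomial (Fin r) k) :
    substAct w (expand m φ) = expand m (rename σ.symm φ) := by
  have : (substAct w).comp (expand m) = (expand m).comp (rename σ.symm) := by
    ext1 i
    have := h1 (σ.symm i)
    rw [Equiv.apply_symm_apply] at this
    simp only [AlgHom.comp_apply, expand_X, rename_X, map_pow, substAct_X w σ h, mul_pow,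
      ← C_pow, this]
    simp
  exact DFunLike.congr_fun this φ

lemma coeff_substAct_diagonal {k : Type*} [Field k] {r : ℕ} (c : Fin r → k)
    (f : MvPolynomial (Fin r) k) (d : Fin r →₀ ℕ) :
    coeff d (substAct (Matrix.diagonal c) f) = (∏ i, c i ^ d i) * coeff d f := by
  have hX : ∀ i, substAct (Matrix.diagonal c) (X i) = C (c i) * X i := fun i => by
    have h := substAct_X (Matrix.diagonal c) 1
      (fun i j hij => Matrix.diagonal_apply_ne _ hij) i
    have h2 : Matrix.diagonal c i i = c i := Matrix.diagonal_apply_eq c i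
    exact h.trans (congrArg (fun a => C a * X i) h2)
  have hmon : ∀ (e : Fin r →₀ ℕ) (a : k), substAct (Matrix.diagonal c) (monomial e a) =
      monomial e ((∏ i, c i ^ e i) * a) := fun e a => by
    rw [monomial_eq, monomial_eq, map_mul, Finsupp.prod_fintype _ _ (by simp), map_prod]
    simp only [map_pow, hX, mul_pow, Finset.prod_mul_distrib, C_mul, map_prod]
    rw [← algebraMap_eq, AlgHom.commutes]
    ring
  induction f using MvPolynomial.induction_on' with
  | monomial e a =>
    rw [hmon, coeff_monomial, coeff_monomial]
    split_ifs with h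
    · rw [h]
    · simp
  | add p q hp hq => rw [map_add, coeff_add, coeff_add, hp, hq, mul_add]

lemma aeval_powerEsymm {k : Type*} [Field k] (m r : ℕ) (p : MvPolynomial (Fin r) k) :
    aeval (fun j : Fin r => powerEsymm k r m ((j : ℕ) + 1)) p =
      expand m (esymmAlgHom (Fin r) k r p : MvPolynomial (Fin r) k) := by
  rw [esymmAlgHom_apply]
  have : aeval (fun j : Fin r => powerEsymm k r m ((j : ℕ) + 1)) =
      (expand m).comp (aeval (fun j : Fin r => esymm (Fin r) k ((j : ℕ) + 1))) := by
    ext1 i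
    simp only [AlgHom.comp_apply, aeval_X]
    rfl
  exact DFunLike.congr_fun this p

lemma exists_expand {k : Type*} [Field k] {m r : ℕ} (f : MvPolynomial (Fin r) k)
    (h : ∀ d, coeff d f ≠ 0 → ∀ i, m ∣ d i) : ∃ g, expand m g = f := by
  have h2 : f ∈ (expand m : MvPolynomial (Fin r) k →ₐ[k] _).range := by
    rw [f.as_sum]
    refine Subalgebra.sum_mem _ fun d hd => ?_
    choose e he using h d (mem_support_iff.1 hd)
    refine ⟨monomial (Finsupp.equivFunOnFinite.symm e) (coeff d f), ?_⟩
    change expand m _ = _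
    rw [expand_monomial]
    congr 2
    ext i
    simp [he]
  exact h2

/-- the invariants of `G(m,1,r)` acting on `k[x₁,…,x_r]` by
linear substitutions form the subalgebra generated by
`e_j(x₁^m,…,x_r^m)`, `j = 1,…,r`, and these generators are algebraically
independent. -/
theorem stmt17 {k : Type*} [Field k] (m r : ℕ) (hm : 0 < m) (hr : 0 < r)
    (hprim : ∃ ζ : k, IsPrimitiveRoot ζ m) :
    {f : MvPolynomial (Fin r) k | ∀ w ∈ GmqrSet k m 1 r, substAct w f = f} =
      ↑(Algebra.adjoin k (Set.range fun j : Fin r => powerEsymm k r m ((j : ℕ) + 1))) ∧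
    AlgebraicIndependent k (fun j : Fin r => powerEsymm k r m ((j : ℕ) + 1)) := by
  obtain ⟨ζ, hζ⟩ := hprim
  constructor
  · ext f
    rw [Algebra.adjoin_range_eq_range_aeval, Set.mem_setOf_eq, SetLike.mem_coe, AlgHom.mem_range]
    constructor
    · intro hf
      obtain ⟨g, rfl⟩ : ∃ g, expand m g = f := by
        refine exists_expand f fun d hd i => ?_
        have hw := hf (Matrix.diagonal (Function.update 1 i ζ)) ⟨1, fun a b hab =>
          Matrix.diagonal_apply_ne _ hab, fun j => ?_, ?_⟩
        · have h1 := coeff_substAct_diagonal (Function.update 1 i ζ) f d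
          rw [hw, Finset.prod_eq_single i (fun j _ hj => by simp [hj]) (by simp)] at h1
          have h2 := (right_eq_mul₀ hd).1 h1
          rw [Function.update_self] at h2
          exact hζ.dvd_of_pow_eq_one _ h2
        · by_cases hj : j = i
          · subst hj; simp [hζ.pow_eq_one]
          · simp [hj]
        · rw [Nat.div_one, Finset.prod_eq_single i (fun j _ hj => by simp [hj]) (by simp)]
          simp [hζ.pow_eq_one]
      have hsym : g.IsSymmetric := by
        intro τ
        have hw := hf (fun i j => if i = τ.symm j then 1 else 0) ⟨τ.symm, fun i j hij => if_neg hij,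
          fun j => by simp, by simp⟩
        rw [substAct_expand _ τ.symm (fun i j hij => if_neg hij) (fun j => by simp)] at hw
        exact expand_injective hm hw
      obtain ⟨p, hp⟩ := (esymmAlgHom_fin_bijective k r).2 ⟨g, hsym⟩
      exact ⟨p, by rw [aeval_powerEsymm, hp]⟩
    · rintro ⟨p, rfl⟩ w ⟨σ, h0, h1, -⟩
      rw [aeval_powerEsymm, substAct_expand w σ h0 h1]
      congr 1
      exact (esymmAlgHom (Fin r) k r p).2 σ.symm
  · intro p q hpq
    rw [aeval_powerEsymm, aeval_powerEsymm] at hpq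
    exact (esymmAlgHom_fin_bijective k r).1 (Subtype.ext (expand_injective hm hpq))
end

section
/- Let k be a field containing a primitive m-th root of unity (so the characteristic of k does not divide m), let m be an even positive integer and r a positive integer. Let W = G(m,2,r) ⊆ GL(r,k) be the group of r×r monomial matrices whose nonzero entries are m-th roots of unity and the product of whose nonzero entries is an (m/2)-th root of unity, acting on k[x₁,…,x_r] by linear substitutions. Then the invariant algebra k[x₁,…,x_r]^W equals the k-subalgebra generated by the r polynomials e_1(x₁^m,…,x_r^m), …, e_{r−1}(x₁^m,…,x_r^m) and (x₁⋯x_r)^{m/2}, where e_j is the j-th elementary symmetric polynomial; moreover these r generators are algebraically independent over k, so the invariant algebra is a polynomial ring in r variables. -/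
/-- The generators for the invariants of `G(m,2,r)`:
`e_1(x^m), …, e_{r-1}(x^m)` together with `(x₁⋯x_r)^{m/2}`. -/
noncomputable def gens18 (k : Type*) [Field k] (r m : ℕ) :
    Fin r → MvPolynomial (Fin r) k := fun j =>
  if (j : ℕ) + 1 < r then powerEsymm k r m ((j : ℕ) + 1)
  else (∏ i : Fin r, (MvPolynomial.X i : MvPolynomial (Fin r) k)) ^ (m / 2)

open MvPolynomial in
lemma aux_contract {k : Type*} [Field k] {r : ℕ} (m : ℕ) (f : MvPolynomial (Fin r) k)
    (s : Fin r →₀ ℕ) (hs : ∀ i, s i < m) :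
    ∃ g : MvPolynomial (Fin r) k, ∀ d, coeff d g = coeff (m • d + s) f := by
  classical
  refine ⟨∑ d ∈ f.support.image (fun e => Finsupp.mapRange (fun n => n / m) (Nat.zero_div m) e),
    monomial d (coeff (m • d + s) f), fun d => ?_⟩
  rw [coeff_sum]
  simp only [coeff_monomial]
  rw [Finset.sum_ite_eq']
  split_ifs with h
  · rfl
  · symm
    by_contra hne
    apply h
    rw [Finset.mem_image]
    refine ⟨m • d + s, mem_support_iff.2 hne, ?_⟩
    ext i
    have := hs i
    simp only [Finsupp.mapRange_apply, Finsupp.add_apply, Finsupp.smul_apply, smul_eq_mul]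
    rw [Nat.mul_add_div (by omega), Nat.div_eq_of_lt this, add_zero]

open MvPolynomial in
lemma aux_contract_symm {k : Type*} [Field k] {r : ℕ} (m c : ℕ) (f g : MvPolynomial (Fin r) k)
    (hf : f.IsSymmetric) (s : Fin r →₀ ℕ) (hs : ∀ i, s i = c)
    (hg : ∀ d, coeff d g = coeff (m • d + s) f) : g.IsSymmetric := by
  intro σ
  ext d
  obtain ⟨d', rfl⟩ : ∃ d', d = Finsupp.mapDomain σ d' :=
    ⟨Finsupp.mapDomain σ.symm d, by
      rw [← Finsupp.mapDomain_comp]; simp [Finsupp.mapDomain_id]⟩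
  rw [coeff_rename_mapDomain _ σ.injective, hg, hg]
  have h1 : m • Finsupp.mapDomain σ d' + s = Finsupp.mapDomain σ (m • d' + s) := by
    rw [Finsupp.mapDomain_add, Finsupp.mapDomain_smul]
    congr 1
    ext i
    obtain ⟨j, rfl⟩ := σ.surjective i
    rw [Finsupp.mapDomain_apply σ.injective, hs, hs]
  rw [h1]
  conv_rhs => rw [← hf σ]
  rw [coeff_rename_mapDomain _ σ.injective]

open MvPolynomial in
lemma aux_diag {k : Type*} [Field k] {r : ℕ} (t : Fin r → k) (f : MvPolynomial (Fin r) k)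
    (d : Fin r →₀ ℕ) :
    coeff d (substAct (Matrix.diagonal t) f) = (∏ i, t i ^ d i) * coeff d f := by
  have hX : ∀ i, substAct (Matrix.diagonal t) (X i) = C (t i) * X i := by
    intro i
    simp [substAct, Matrix.diagonal_apply, ite_apply]
    rw [Finset.sum_eq_single i] <;> simp +contextual [eq_comm]
  induction f using MvPolynomial.induction_on' with
  | add p q hp hq => simp [hp, hq, mul_add]
  | monomial e a =>
    have : substAct (Matrix.diagonal t) (monomial e a) = C (∏ i, t i ^ e i) * monomial e a := by
      rw [monomial_eq, Finsupp.prod_fintype _ _ (by simp), map_mul, map_prod]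
      simp only [map_pow, hX, mul_pow, Finset.prod_mul_distrib, map_prod]
      rw [show substAct (Matrix.diagonal t) (C a) = C a from algHom_C _ _]
      ring
    rw [this, coeff_C_mul, coeff_monomial]
    split_ifs with h
    · rw [h]
    · simp

open MvPolynomial in
lemma aux_X {k : Type*} [Field k] {r : ℕ} (w : Matrix (Fin r) (Fin r) k)
    (σ : Equiv.Perm (Fin r)) (h0 : ∀ i j, i ≠ σ j → w i j = 0) (j : Fin r) :
    substAct w (X (σ j)) = C (w (σ j) j) * X j := by
  rw [substAct, aeval_X, Finset.sum_eq_single j]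
  · intro b _ hb
    rw [h0 _ _ (fun h => hb (σ.injective h).symm)]; simp
  · simp

open MvPolynomial in
lemma aux_esymm_last (k : Type*) [Field k] (r m : ℕ) :
    powerEsymm k r m r = (∏ i : Fin r, (X i : MvPolynomial (Fin r) k)) ^ m := by
  have : esymm (Fin r) k r = ∏ i : Fin r, X i := by
    have h2 : Finset.powersetCard r (Finset.univ : Finset (Fin r)) = {Finset.univ} := by
      have := Finset.powersetCard_self (Finset.univ : Finset (Fin r))
      rwa [Finset.card_univ, Fintype.card_fin] at this
    rw [esymm, h2]; simp
  rw [powerEsymm, this]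
  simp [Finset.prod_pow]

lemma aux_mem (k : Type*) [Field k] (r m : ℕ) (hmeven : Even m) (i : Fin r) :
    powerEsymm k r m (i + 1) ∈ Algebra.adjoin k (Set.range (gens18 k r m)) := by
  have hg : gens18 k r m i ∈ Algebra.adjoin k (Set.range (gens18 k r m)) :=
    Algebra.subset_adjoin ⟨i, rfl⟩
  by_cases h : (i : ℕ) + 1 < r
  · simpa [gens18, h] using hg
  · have h2 : (i : ℕ) + 1 = r := by have := i.2; omega
    rw [gens18, if_neg h] at hg
    have := pow_mem hg 2
    rw [← pow_mul, Nat.div_mul_cancel hmeven.two_dvd] at this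
    rw [h2, aux_esymm_last]
    exact this

open MvPolynomial in
lemma aux_expand_mem (k : Type*) [Field k] (r m : ℕ) (hmeven : Even m)
    (g : MvPolynomial (Fin r) k) (hg : g.IsSymmetric) :
    expand m g ∈ Algebra.adjoin k (Set.range (gens18 k r m)) := by
  obtain ⟨p, hp⟩ := esymmAlgHom_fin_surjective (R := k) (le_refl r) ⟨g, hg⟩
  have h : g = aeval (fun i : Fin r ↦ esymm (Fin r) k (i + 1)) p := by
    rw [← esymmAlgHom_apply, hp]
  rw [h, ← AlgHom.comp_apply, comp_aeval]
  have : ∀ i : Fin r, (expand m (esymm (Fin r) k (i + 1))) ∈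
      Algebra.adjoin k (Set.range (gens18 k r m)) := aux_mem k r m hmeven
  have h3 : aeval (fun i : Fin r => expand m (esymm (Fin r) k (i + 1))) p ∈
      Algebra.adjoin k (Set.range fun i : Fin r => expand m (esymm (Fin r) k (i + 1))) := by
    rw [Algebra.adjoin_range_eq_range_aeval]
    exact ⟨p, rfl⟩
  refine (Algebra.adjoin_le_iff.2 ?_) h3
  rintro _ ⟨i, rfl⟩
  exact this i

lemma aux_indep {k : Type*} [Field k] (m r : ℕ) (hm : 0 < m) (hmeven : Even m) :
    AlgebraicIndependent k (gens18 k r m) := by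
  have hE : AlgebraicIndependent k (fun i : Fin r => powerEsymm k r m (i + 1)) := by
    have h1 : AlgebraicIndependent k
        (fun i : Fin r => MvPolynomial.esymm (Fin r) k (i + 1)) := by
      intro p q hpq
      apply MvPolynomial.esymmAlgHom_fin_injective (R := k) (le_refl r)
      apply Subtype.ext
      have := MvPolynomial.esymmAlgHom_apply (σ := Fin r) (R := k) (n := r) p
      have := MvPolynomial.esymmAlgHom_apply (σ := Fin r) (R := k) (n := r) q
      simp_all
    exact h1.map' (f := MvPolynomial.expand m) (MvPolynomial.expand_injective hm)
  have hB := hE.isTranscendenceBasis_of_lift_trdeg_le_of_finite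
    (by rw [MvPolynomial.trdeg_of_isDomain]; simp)
  have hle : Algebra.adjoin k (Set.range fun i : Fin r => powerEsymm k r m (i + 1)) ≤
      Algebra.adjoin k (Set.range (gens18 k r m)) := by
    rw [Algebra.adjoin_le_iff]
    rintro _ ⟨i, rfl⟩
    exact aux_mem k r m hmeven i
  have hA := hB.isAlgebraic
  have : Algebra.IsAlgebraic (Algebra.adjoin k (Set.range (gens18 k r m)))
      (MvPolynomial (Fin r) k) :=
    ⟨fun x => (hA.isAlgebraic x).tower_top_of_subalgebra_le hle⟩
  exact (Algebra.IsAlgebraic.isTranscendenceBasis_of_lift_le_trdeg_of_finite k (gens18 k r m)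
    (by rw [MvPolynomial.trdeg_of_isDomain]; simp)).1

open MvPolynomial in
lemma aux_inv {k : Type*} [Field k] (m r : ℕ) (w : Matrix (Fin r) (Fin r) k)
    (hw : w ∈ GmqrSet k m 2 r) (i : Fin r) : substAct w (gens18 k r m i) = gens18 k r m i := by
  obtain ⟨σ, h0, h1, h2⟩ := hw
  have hX := aux_X w σ h0
  have hexp : (substAct w).comp (expand m) = (rename σ.symm).comp (expand m) := by
    ext1 i
    obtain ⟨j, rfl⟩ := σ.surjective i
    simp [hX, mul_pow, ← C_pow, h1]
  rw [gens18]
  split_ifs with h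
  · have := DFunLike.congr_fun hexp (esymm (Fin r) k (i + 1))
    simp only [AlgHom.comp_apply, rename_expand] at this
    rw [(esymm_isSymmetric (Fin r) k _) σ.symm] at this
    exact this
  · rw [map_pow, map_prod, ← Equiv.prod_comp σ]
    simp only [hX, Finset.prod_mul_distrib, mul_pow]
    rw [← map_prod, ← C_pow, h2, C_1, one_mul]

open MvPolynomial in
lemma aux_dvd {k : Type*} [Field k] (m r : ℕ) (hmeven : Even m)
    (ζ : k) (hζ : IsPrimitiveRoot ζ m) (hm : 0 < m) (f : MvPolynomial (Fin r) k)
    (hf : ∀ w ∈ GmqrSet k m 2 r, substAct w f = f) (e : Fin r →₀ ℕ) (he : coeff e f ≠ 0) :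
    (∀ i, m ∣ 2 * e i) ∧ (∀ i j, e i ≡ e j [MOD m]) := by
  have key : ∀ t : Fin r → k, (∀ i, t i ^ m = 1) → (∏ i, t i) ^ (m / 2) = 1 →
      ∏ i, t i ^ e i = 1 := by
    intro t h1 h2
    have hw : Matrix.diagonal t ∈ GmqrSet k m 2 r :=
      ⟨1, fun i j hij => Matrix.diagonal_apply_ne _ (by simpa using hij), by simpa using h1,
        by simpa using h2⟩
    have := aux_diag t f e
    rw [hf _ hw] at this
    exact mul_right_cancel₀ he (by rw [← this, one_mul])
  have hz : ζ ≠ 0 := hζ.ne_zero hm.ne'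
  refine ⟨fun i => ?_, fun i j => ?_⟩
  · have := key (fun l => if l = i then ζ ^ 2 else 1)
      (fun l => by
        split_ifs
        · rw [← pow_mul, mul_comm, pow_mul, hζ.pow_eq_one, one_pow]
        · simp)
      (by rw [Finset.prod_ite_eq' ]
          simp only [Finset.mem_univ, if_true]
          rw [← pow_mul, Nat.mul_div_cancel' hmeven.two_dvd, hζ.pow_eq_one])
    simp only [ite_pow, one_pow] at this
    rw [Finset.prod_ite_eq'] at this
    simp only [Finset.mem_univ, if_true] at this
    rw [← pow_mul] at this
    exact (hζ.pow_eq_one_iff_dvd _).1 this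
  · by_cases hij : i = j
    · rw [hij]
    have := key (fun l => (if l = i then ζ else 1) * (if l = j then ζ⁻¹ else 1))
      (fun l => by
        rw [mul_pow]
        split_ifs <;> simp [hζ.pow_eq_one])
      (by rw [Finset.prod_mul_distrib, Finset.prod_ite_eq', Finset.prod_ite_eq']
          simp [hz])
    simp only [mul_pow, ite_pow, one_pow] at this
    rw [Finset.prod_mul_distrib, Finset.prod_ite_eq', Finset.prod_ite_eq'] at this
    simp only [Finset.mem_univ, if_true, inv_pow] at this
    rw [mul_inv_eq_one₀ (pow_ne_zero _ hz)] at this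
    have hu : (Units.mk0 ζ hz) ^ e i = (Units.mk0 ζ hz) ^ e j := by
      ext; simpa using this
    rw [hζ.eq_orderOf, show ζ = ((Units.mk0 ζ hz : kˣ) : k) from rfl, orderOf_units]
    exact pow_eq_pow_iff_modEq.1 hu

open MvPolynomial in
lemma aux_symm {k : Type*} [Field k] (m r : ℕ) (f : MvPolynomial (Fin r) k)
    (hf : ∀ w ∈ GmqrSet k m 2 r, substAct w f = f) : f.IsSymmetric := by
  intro σ
  let w : Matrix (Fin r) (Fin r) k := fun i j => if i = σ.symm j then 1 else 0
  have hw0 : ∀ i j, i ≠ σ.symm j → w i j = 0 := fun i j h => if_neg h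
  have hw1 : ∀ j, w (σ.symm j) j = 1 := fun j => if_pos rfl
  have hw : w ∈ GmqrSet k m 2 r := ⟨σ.symm, hw0, by simp [hw1], by simp [hw1]⟩
  have hX := aux_X w σ.symm hw0
  have : substAct w = rename σ := by
    ext1 i
    obtain ⟨j, rfl⟩ := σ.symm.surjective i
    rw [hX, hw1]; simp
  rw [← this, hf w hw]

open MvPolynomial in
lemma aux_decomp {k : Type*} [Field k] (m n r : ℕ) (hm : 0 < n) (hmn : m = 2 * n) (hr : 0 < r)
    (f g0 g1 : MvPolynomial (Fin r) k) (s : Fin r →₀ ℕ) (hs : ∀ i, s i = n)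
    (hf : ∀ e, coeff e f ≠ 0 → (∀ i, m ∣ 2 * e i) ∧ (∀ i j, e i ≡ e j [MOD m]))
    (h0 : ∀ d, coeff d g0 = coeff (m • d + 0) f) (h1 : ∀ d, coeff d g1 = coeff (m • d + s) f) :
    f = expand m g0 + monomial s 1 * expand m g1 := by
  have hm0 : m ≠ 0 := by omega
  let i0 : Fin r := ⟨0, hr⟩
  ext e
  rw [coeff_add, coeff_monomial_mul', one_mul]
  by_cases c0 : ∀ i, m ∣ e i
  · obtain ⟨d, rfl⟩ : ∃ d : Fin r →₀ ℕ, e = m • d :=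
      ⟨Finsupp.mapRange (fun x => x / m) (Nat.zero_div m) e, by
        ext i; simp [Nat.mul_div_cancel' (c0 i)]⟩
    rw [coeff_expand_smul _ hm0, h0, add_zero]
    split_ifs with hle
    · rw [coeff_expand_of_not_dvd (i := i0), add_zero]
      intro hd
      have hle' := hle i0
      rw [Finsupp.tsub_apply, hs] at hd
      rw [hs] at hle'
      have h3 := (Nat.dvd_sub_iff_right hle' (c0 i0)).1 hd
      have := Nat.le_of_dvd hm h3
      omega
    · rw [add_zero]
  · push Not at c0
    obtain ⟨i, hi⟩ := c0
    rw [coeff_expand_of_not_dvd g0 hi, zero_add]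
    by_cases c1 : s ≤ e ∧ ∀ i, m ∣ (e - s) i
    · obtain ⟨c1, c2⟩ := c1
      rw [if_pos c1]
      obtain ⟨d, hd⟩ : ∃ d : Fin r →₀ ℕ, e - s = m • d :=
        ⟨Finsupp.mapRange (fun x => x / m) (Nat.zero_div m) (e - s), by
          ext i; rw [Finsupp.smul_apply, Finsupp.mapRange_apply, smul_eq_mul,
            Nat.mul_div_cancel' (c2 i)]⟩
      rw [hd, coeff_expand_smul _ hm0, h1, ← hd, tsub_add_cancel_of_le c1]
    · have hz : coeff e f = 0 := by
        by_contra hne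
        obtain ⟨a, b⟩ := hf e hne
        have hmod : ∀ j, e j % m = n := by
          have hi' : e i % m = n := by
            obtain ⟨q, hq⟩ := a i
            have hq : e i = n * q := by
              rw [hmn, mul_assoc] at hq; omega
            obtain ⟨u, hu | hu⟩ := Nat.even_or_odd' q
            · exact absurd ⟨u, by rw [hq, hu, hmn]; ring⟩ hi
            · rw [hq, hu, hmn, show n * (2 * u + 1) = 2 * n * u + n by ring, Nat.mul_add_mod,
                Nat.mod_eq_of_lt (by omega)]
          intro j
          rw [← hi']
          exact b j i
        apply c1
        have hdec : ∀ j, e j = m * (e j / m) + n := fun j => by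
          conv_lhs => rw [← Nat.div_add_mod (e j) m, hmod j]
        refine ⟨fun j => ?_, fun j => ?_⟩
        · rw [hs, hdec j]; omega
        · rw [Finsupp.tsub_apply, hs, hdec j]; simp
      rw [hz]
      split_ifs with hle
      · push Not at c1
        obtain ⟨j, hj⟩ := c1 hle
        rw [coeff_expand_of_not_dvd g1 hj]
      · rfl

theorem stmt18 {k : Type*} [Field k] (m r : ℕ) (hm : 0 < m) (hmeven : Even m)
    (hr : 0 < r) (hprim : ∃ ζ : k, IsPrimitiveRoot ζ m) :
    {f : MvPolynomial (Fin r) k | ∀ w ∈ GmqrSet k m 2 r, substAct w f = f} =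
      ↑(Algebra.adjoin k (Set.range (gens18 k r m))) ∧
    AlgebraicIndependent k (gens18 k r m) := by
  refine ⟨Set.Subset.antisymm ?_ ?_, aux_indep m r hm hmeven⟩
  · intro f hf
    obtain ⟨ζ, hζ⟩ := hprim
    have hsym := aux_symm m r f hf
    have hmn : m = 2 * (m / 2) := (Nat.mul_div_cancel' hmeven.two_dvd).symm
    let s : Fin r →₀ ℕ := Finsupp.equivFunOnFinite.symm (fun _ => m / 2)
    have hs : ∀ i, s i = m / 2 := fun i => rfl
    obtain ⟨g0, h0⟩ := aux_contract m f 0 (fun i => hm)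
    obtain ⟨g1, h1⟩ := aux_contract m f s (fun i => by rw [hs]; omega)
    have hdec := aux_decomp m (m / 2) r (by omega) hmn hr f g0 g1 s hs
      (aux_dvd m r hmeven ζ hζ hm f hf) h0 h1
    have hs1 : (MvPolynomial.monomial s 1 : MvPolynomial (Fin r) k) =
        gens18 k r m ⟨r - 1, by omega⟩ := by
      rw [gens18, if_neg (by simp; omega), MvPolynomial.monomial_eq,
        Finsupp.prod_fintype _ _ (by simp)]
      simp [hs, Finset.prod_pow]
    rw [hdec, hs1]
    exact add_mem (aux_expand_mem k r m hmeven g0 (aux_contract_symm m 0 f g0 hsym 0 (by simp) h0))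
      (mul_mem (Algebra.subset_adjoin ⟨_, rfl⟩)
        (aux_expand_mem k r m hmeven g1 (aux_contract_symm m _ f g1 hsym s hs h1)))
  · intro f hf w hw
    have : Algebra.adjoin k (Set.range (gens18 k r m)) ≤
        AlgHom.equalizer (substAct w) (AlgHom.id k _) := by
      rw [Algebra.adjoin_le_iff]
      rintro _ ⟨i, rfl⟩
      exact aux_inv m r w hw i
    exact this hf
end

section
/- Let k be an algebraically closed field, m a positive integer, ζ ∈ k a primitive m-th root of unity, and g ∈ GL(n,k) a matrix such that g^m is a scalar matrix. Set 𝔤(1) = {x ∈ Mₙ(k) : g·x·g⁻¹ = ζ·x} and H = {h ∈ GL(n,k) : h·g = g·h}. Then any two Cartan subspaces of 𝔤(1) are conjugate by an element of H: if c₁ and c₂ are both subspaces of 𝔤(1) maximal among subspaces consisting of pairwise commuting diagonalizable matrices, then there exists h ∈ H with h·c₁·h⁻¹ = c₂. -/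
section
open Module Polynomial

/-- semisimplicity from locally killing squarefree polynomials -/
theorem aux_ss {k V : Type*} [Field k] [AddCommGroup V] [Module k V]
    {ι : Type*} [Fintype ι] (f : End k V) (v : ι → V) (hv : Submodule.span k (Set.range v) = ⊤)
    (p : ι → k[X]) (hp : ∀ i, Squarefree (p i)) (h : ∀ i, aeval f (p i) (v i) = 0) :
    f.IsSemisimple := by
  classical
  have hne : (∏ i, p i) ≠ 0 := Finset.prod_ne_zero_iff.mpr fun i _ => (hp i).ne_zero
  refine Module.End.isSemisimple_of_squarefree_aeval_eq_zero
    (p := UniqueFactorizationMonoid.radical (∏ i, p i))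
    UniqueFactorizationMonoid.squarefree_radical ?_
  refine LinearMap.ext_on_range hv fun i => ?_
  obtain ⟨q, hq⟩ := (UniqueFactorizationMonoid.dvd_radical_iff (hp i).isRadical hne).mpr
    (Finset.dvd_prod_of_mem p (Finset.mem_univ i))
  rw [hq, mul_comm, map_mul, Module.End.mul_apply, h]
  simp

theorem aux_eigbasis {k V : Type*} [Field k] [AddCommGroup V] [Module k V] [FiniteDimensional k V]
    (S : Set V) (U : Submodule k V) (hS : Submodule.span k S = U) :
    ∃ b : Basis (Fin (finrank k U)) k U, ∀ i, (b i : V) ∈ S := by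
  obtain ⟨T, hT, hspan, hli⟩ := exists_linearIndependent k S
  let b := Basis.span hli
  have hU : Submodule.span k (Set.range (Subtype.val : T → V)) = U := by
    rw [Subtype.range_coe, hspan, hS]
  subst hU
  have : Fintype T := FiniteDimensional.fintypeBasisIndex b
  have hc : Fintype.card T = finrank k (Submodule.span k (Set.range (Subtype.val : T → V))) :=
    (finrank_eq_card_basis b).symm
  refine ⟨b.reindex (Fintype.equivFinOfCardEq hc), fun i => ?_⟩
  simp only [Basis.coe_reindex, Function.comp_apply]
  have := Basis.span_apply hli ((Fintype.equivFinOfCardEq hc).symm i)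
  rw [show b _ = _ from this]
  exact hT (Subtype.coe_prop _)

theorem aux_ssmat_to {k : Type*} [Field k] {n : ℕ} (x : Matrix (Fin n) (Fin n) k)
    (h : IsSemisimpleMat x) : Module.End.IsSemisimple (Matrix.toLin' x) := by
  obtain ⟨P, hP, hd⟩ := h
  have hx : x * P⁻¹ = P⁻¹ * Matrix.diagonal (Matrix.diag (P * x * P⁻¹)) := by
    rw [hd.diagonal_diag, Matrix.mul_assoc, ← Matrix.mul_assoc, Matrix.nonsing_inv_mul _ hP,
      Matrix.one_mul]
  set d := Matrix.diag (P * x * P⁻¹)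
  refine aux_ss _ (fun i => P⁻¹.col i) ?_ (fun i => X - C (d i))
    (fun i => (separable_X_sub_C).squarefree) fun i => ?_
  · have := Matrix.range_mulVecLin P⁻¹
    rw [← this, LinearMap.range_eq_top]
    intro y
    refine ⟨P.mulVec y, ?_⟩
    simp [Matrix.nonsing_inv_mul _ hP]
  · have := congrArg (fun M => Matrix.col M i) hx
    simp only [map_sub, aeval_X, aeval_C, LinearMap.sub_apply, Matrix.toLin'_apply,
      algebraMap_end_apply, sub_eq_zero]
    funext r
    have := congrFun this r
    simpa [Matrix.mul_apply, Matrix.mulVec, dotProduct, mul_comm, Matrix.diagonal_apply] using this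

theorem aux_ssmat_of {k : Type*} [Field k] [IsAlgClosed k] {n : ℕ} (x : Matrix (Fin n) (Fin n) k)
    (h : Module.End.IsSemisimple (Matrix.toLin' x)) : IsSemisimpleMat x := by
  have h1 := h.iSup_eigenspace_eq_top
  obtain ⟨b, hb⟩ := aux_eigbasis (k := k) {v | ∃ μ : k, Matrix.toLin' x v = μ • v} ⊤ (by
    rw [eq_top_iff, ← h1]
    refine iSup_le fun μ v hv => Submodule.subset_span ⟨μ, ?_⟩
    simpa [Module.End.mem_eigenspace_iff] using hv)
  have hn : finrank k (⊤ : Submodule k (Fin n → k)) = n := by simp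
  let b' : Basis (Fin n) k (Fin n → k) := (b.reindex (finCongr hn)).map Submodule.topEquiv
  have hb' : ∀ i, ∃ μ : k, Matrix.toLin' x (b' i) = μ • b' i := fun i => by
    simpa [b'] using hb _
  choose μ hμ using hb'
  let Q : Matrix (Fin n) (Fin n) k := (Pi.basisFun k (Fin n)).toMatrix b'
  let P : Matrix (Fin n) (Fin n) k := b'.toMatrix (Pi.basisFun k (Fin n))
  have hPQ : P * Q = 1 := Basis.toMatrix_mul_toMatrix_flip _ _
  have hQi : P⁻¹ = Q := Matrix.inv_eq_right_inv hPQ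
  refine ⟨P, Matrix.isUnit_det_of_right_inverse hPQ, ?_⟩
  have hx : x * Q = Q * Matrix.diagonal μ := by
    ext i j
    have := congrFun (hμ j) i
    simpa [Q, Matrix.mul_apply, Matrix.mulVec, dotProduct, Basis.toMatrix_apply, mul_comm,
      Matrix.diagonal_apply] using this
  rw [hQi, Matrix.mul_assoc, hx, ← Matrix.mul_assoc, hPQ, Matrix.one_mul]
  exact Matrix.isDiag_diagonal μ

theorem aux_reps {k : Type*} [Field k] {m : ℕ} (hm : 0 < m) {η : k} (hη : IsPrimitiveRoot η m)
    (ι : Type*) : ∃ R : Set (ι → k), (0 : ι → k) ∉ R ∧ (∀ χ : ι → k, χ ≠ 0 → ∃ l : ℕ, η ^ l • χ ∈ R) ∧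
      (∀ χ ∈ R, ∀ l : ℕ, 0 < l → l < m → η ^ l • χ ∉ R) := by
  have hη0 : η ≠ 0 := hη.ne_zero hm.ne'
  let s : Setoid (ι → k) :=
    { r := fun χ ψ => ∃ l : ℕ, ψ = η ^ l • χ
      iseqv := by
        refine ⟨fun χ => ⟨0, by simp⟩, ?_, ?_⟩
        · rintro χ ψ ⟨l, rfl⟩
          refine ⟨m * l - l, ?_⟩
          rw [smul_smul, ← pow_add, Nat.sub_add_cancel (Nat.le_mul_of_pos_left l hm), pow_mul,
            hη.pow_eq_one, one_pow, one_smul]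
        · rintro χ ψ φ ⟨l, rfl⟩ ⟨l', rfl⟩
          exact ⟨l' + l, by rw [smul_smul, pow_add]⟩ }
  refine ⟨{χ | χ ≠ 0 ∧ ∃ q : Quotient s, χ = q.out}, by simp, ?_, ?_⟩
  · intro χ hχ
    obtain ⟨l, hl⟩ : s.r χ (Quotient.mk s χ).out := s.symm (Quotient.mk_out χ)
    refine ⟨l, smul_ne_zero (pow_ne_zero _ hη0) hχ, Quotient.mk s χ, hl.symm⟩
  · rintro χ ⟨hχ, q, hq⟩ l hl hlm ⟨_, q', hq'⟩
    have hqq : q = q' := by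
      rw [← Quotient.out_eq q, ← Quotient.out_eq q', ← hq, ← hq']
      exact Quotient.sound ⟨l, rfl⟩
    rw [← hqq, ← hq] at hq'
    have h1 : (η ^ l - 1) • χ = 0 := by rw [sub_smul, hq', one_smul, sub_self]
    rcases smul_eq_zero.mp h1 with h | h
    · exact hη.pow_ne_one_of_pos_of_lt hl.ne' hlm (sub_eq_zero.mp h)
    · exact hχ h

/-- unnormalised projection to an eigenspace -/
def auxPi {k V : Type*} [Field k] [AddCommGroup V] [Module k V] (g : End k V) (m : ℕ) (μ : k) :
    End k V := ∑ l ∈ Finset.range m, (μ⁻¹) ^ l • g ^ l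

theorem auxPi_apply {k V : Type*} [Field k] [AddCommGroup V] [Module k V] (g : End k V) (m : ℕ)
    (μ : k) (v : V) : auxPi g m μ v = ∑ l ∈ Finset.range m, (μ⁻¹) ^ l • (g ^ l) v := by
  simp [auxPi, LinearMap.sum_apply]

theorem auxPi_mul {k V : Type*} [Field k] [AddCommGroup V] [Module k V] (g : End k V) (m : ℕ)
    (μ a : k) (hμ : μ ≠ 0) (ha : μ ^ m = a) (hg : g ^ m = a • (1 : End k V)) :
    g * auxPi g m μ = μ • auxPi g m μ ∧ auxPi g m μ * g = μ • auxPi g m μ := by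
  have h0 : auxPi g m μ = ∑ l ∈ Finset.range m, (μ⁻¹ • g) ^ l := by
    simp [auxPi, _root_.smul_pow]
  have h1 : (μ⁻¹ • g) ^ m = 1 := by
    rw [_root_.smul_pow, hg, smul_smul, ← ha, ← mul_pow, inv_mul_cancel₀ hμ, one_pow, one_smul]
  have h2 := geom_sum_mul (μ⁻¹ • g) m
  have h3 := mul_geom_sum (μ⁻¹ • g) m
  rw [h1, sub_self, ← h0] at h2 h3
  rw [mul_sub, mul_one, sub_eq_zero, mul_smul_comm] at h2
  rw [sub_mul, one_mul, sub_eq_zero, smul_mul_assoc] at h3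
  constructor
  · conv_rhs => rw [← h3, smul_smul, mul_inv_cancel₀ hμ, one_smul]
  · conv_rhs => rw [← h2, smul_smul, mul_inv_cancel₀ hμ, one_smul]

theorem auxPi_eig {k V : Type*} [Field k] [AddCommGroup V] [Module k V] (g : End k V) (m : ℕ)
    (μ : k) (hμ : μ ≠ 0) (v : V) (hv : g v = μ • v) : auxPi g m μ v = (m : k) • v := by
  have : ∀ l : ℕ, (g ^ l) v = μ ^ l • v := by
    intro l
    induction l with
    | zero => simp
    | succ l ih => rw [pow_succ, Module.End.mul_apply, hv, map_smul, ih, smul_smul, pow_succ, mul_comm]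
  rw [auxPi_apply]
  simp only [this, smul_smul, ← mul_pow, inv_mul_cancel₀ hμ, one_pow, one_smul]
  simp [Nat.cast_smul_eq_nsmul]

theorem aux_pow_mem {k V : Type*} [Field k] [AddCommGroup V] [Module k V]
    (g : End k V) {ι : Type*} (η : k) (E : (ι → k) → Submodule k V)
    (hgE : ∀ χ, ∀ v ∈ E χ, g v ∈ E (η • χ)) (l : ℕ) : ∀ χ, ∀ v ∈ E χ, (g ^ l) v ∈ E (η ^ l • χ) := by
  induction l with
  | zero => intro χ v hv; simpa using hv
  | succ l ih =>
    intro χ v hv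
    rw [pow_succ g, Module.End.mul_apply, pow_succ η, mul_smul]
    exact ih _ _ (hgE _ _ hv)

theorem aux_basis {k V : Type*} [Field k] [AddCommGroup V] [Module k V] [FiniteDimensional k V]
    (g : End k V) {m : ℕ} (hm : 0 < m) (hmk : (m : k) ≠ 0) (a : k) (hg : g ^ m = a • (1 : End k V))
    {ι : Type*} (η : k)
    (E : (ι → k) → Submodule k V) (hind : iSupIndep E) (htop : ⨆ χ, E χ = ⊤)
    (hgE : ∀ χ, ∀ v ∈ E χ, g v ∈ E (η • χ))
    (R : Set (ι → k)) (hR0 : (0 : ι → k) ∉ R) (hR1 : ∀ χ : ι → k, χ ≠ 0 → ∃ l : ℕ, η ^ l • χ ∈ R)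
    (hR2 : ∀ χ ∈ R, ∀ l : ℕ, 0 < l → l < m → η ^ l • χ ∉ R)
    (U : Submodule k V) (hU : U = ⨆ χ ∈ R, E χ) (q : ℕ) (u : Basis (Fin q) k U)
    (μ : k) (hμ : μ ≠ 0) (ha : μ ^ m = a) :
    q ≤ finrank k (g.eigenspace μ) ∧ ∃ b : Basis (Fin (finrank k (g.eigenspace μ))) k (g.eigenspace μ),
      ∀ j : Fin (finrank k (g.eigenspace μ)), (∀ h : (j : ℕ) < q, (b j : V) = auxPi g m μ (u ⟨j, h⟩)) ∧ (q ≤ (j : ℕ) → (b j : V) ∈ E 0) := by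
  obtain ⟨hp1, hp2⟩ := auxPi_mul g m μ a hμ ha hg
  have hmem : ∀ v, auxPi g m μ v ∈ g.eigenspace μ := fun v => by
    rw [Module.End.mem_eigenspace_iff]
    exact LinearMap.congr_fun hp1 v
  have hpow := aux_pow_mem g η E hgE
  have hpiE0 : ∀ v ∈ E 0, auxPi g m μ v ∈ E 0 := fun v hv => by
    rw [auxPi_apply]
    refine Submodule.sum_mem _ fun l _ => Submodule.smul_mem _ _ ?_
    simpa using hpow l 0 v hv
  set U' : Submodule k V := ⨆ χ ∈ Rᶜ, E χ with hU'
  have hdisj : Disjoint U U' := hU ▸ hind.disjoint_biSup_biSup disjoint_compl_right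
  have hE0U' : E 0 ≤ U' := le_biSup E (show (0 : ι → k) ∈ Rᶜ from hR0)
  have hgU : ∀ l, 0 < l → l < m → ∀ v ∈ U, (g ^ l) v ∈ U' := by
    intro l hl hlm
    have : U ≤ U'.comap (g ^ l) := by
      rw [hU]
      refine iSup₂_le fun χ hχ v hv => ?_
      exact (le_biSup E (show η ^ l • χ ∈ Rᶜ from hR2 χ hχ l hl hlm)) (hpow l χ v hv)
    exact fun v hv => this hv
  let W : Submodule k (g.eigenspace μ) := (E 0).comap (g.eigenspace μ).subtype
  let F : (U × W) →ₗ[k] g.eigenspace μ :=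
    LinearMap.coprod (LinearMap.codRestrict _ (auxPi g m μ ∘ₗ U.subtype) (fun v => hmem _)) W.subtype
  have hF : ∀ p, (F p : V) = auxPi g m μ (p.1 : V) + ((p.2 : g.eigenspace μ) : V) := fun p => by
    simp [F]
  have hinj : Function.Injective F := by
    rw [injective_iff_map_eq_zero]
    rintro ⟨⟨v, hv⟩, ⟨w, hw⟩⟩ h0
    have h1 := congrArg Subtype.val h0
    rw [hF] at h1
    simp only [ZeroMemClass.coe_zero] at h1
    have hv0 : v = 0 := by
      have hvU' : v ∈ U' := by
        have h2 := h1
        rw [auxPi_apply, ← Finset.sum_erase_add _ _ (Finset.mem_range.mpr hm)] at h2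
        simp only [pow_zero, one_smul, Module.End.one_apply] at h2
        have h3 : v = -((∑ l ∈ (Finset.range m).erase 0, (μ⁻¹) ^ l • (g ^ l) v) + (w : V)) := by
          rw [eq_neg_iff_add_eq_zero, ← h2]; abel
        rw [h3]
        refine Submodule.neg_mem _ (Submodule.add_mem _ (Submodule.sum_mem _ fun l hl => ?_) (hE0U' hw))
        rw [Finset.mem_erase, Finset.mem_range] at hl
        exact Submodule.smul_mem _ _ (hgU l (Nat.pos_of_ne_zero hl.1) hl.2 v hv)
      exact Submodule.disjoint_def.mp hdisj v hv hvU'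
    subst hv0
    rw [map_zero, zero_add] at h1
    ext <;> simp [h1]
  have hsurj : Function.Surjective F := by
    have key : ∀ v : V, (⟨auxPi g m μ v, hmem v⟩ : g.eigenspace μ) ∈ LinearMap.range F := by
      have : (⊤ : Submodule k V) ≤ (LinearMap.range F).comap
          (LinearMap.codRestrict (g.eigenspace μ) (auxPi g m μ) hmem) := by
        rw [← htop]
        refine iSup_le fun χ v hv => ?_
        rw [Submodule.mem_comap]
        by_cases hχ : χ = 0
        · subst hχ
          refine ⟨(0, ⟨⟨auxPi g m μ v, hmem v⟩, hpiE0 v hv⟩), ?_⟩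
          apply Subtype.ext
          rw [hF]; simp
        · obtain ⟨l, hl⟩ := hR1 χ hχ
          have hu : (g ^ l) v ∈ U := hU ▸ (le_biSup E hl) (hpow l χ v hv)
          have hcomm : ∀ l : ℕ, auxPi g m μ ((g ^ l) v) = μ ^ l • auxPi g m μ v := by
            intro l
            induction l with
            | zero => simp
            | succ l ih =>
              rw [pow_succ', Module.End.mul_apply, pow_succ', mul_smul, ← ih]
              exact LinearMap.congr_fun hp2 _
          refine ⟨((μ ^ l)⁻¹ • ⟨_, hu⟩, 0), ?_⟩
          apply Subtype.ext
          rw [hF]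
          simp [hcomm, smul_smul, hμ]
      exact fun v => this (Submodule.mem_top (x := v))
    intro w
    obtain ⟨p, hp⟩ := key w
    refine ⟨(m : k)⁻¹ • p, ?_⟩
    rw [map_smul, hp]
    apply Subtype.ext
    have := auxPi_eig g m μ hμ w (Module.End.mem_eigenspace_iff.mp w.2)
    simp [this, smul_smul, hmk]
  let e := LinearEquiv.ofBijective F ⟨hinj, hsurj⟩
  let B0 := (((u.prod (finBasis k W)).map e).reindex finSumFinEquiv)
  have hfr : q + finrank k W = finrank k (g.eigenspace μ) := by
    rw [finrank_eq_card_basis B0, Fintype.card_fin]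
  refine ⟨by omega, B0.reindex (finCongr hfr), fun j => ⟨fun h => ?_, fun h => ?_⟩⟩
  · have hj : (finCongr hfr).symm j = Fin.castAdd _ ⟨j, h⟩ := by ext; simp
    rw [Basis.reindex_apply, hj]
    simp only [B0, Basis.reindex_apply, finSumFinEquiv_symm_apply_castAdd, Basis.map_apply]
    rw [show e _ = F _ from rfl, hF]
    simp [Basis.prod_apply]
  · have hj : (finCongr hfr).symm j = Fin.natAdd q ⟨j - q, by omega⟩ := by ext; simp; omega
    rw [Basis.reindex_apply, hj]
    simp only [B0, Basis.reindex_apply, finSumFinEquiv_symm_apply_natAdd, Basis.map_apply]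
    rw [show e _ = F _ from rfl, hF]
    simp only [Basis.prod_apply]
    have hW := (finBasis k W ⟨j - q, by omega⟩).2
    simp only [Sum.elim_inr, Function.comp_apply, LinearMap.inr_apply, ZeroMemClass.coe_zero, map_zero, zero_add]
    exact hW

/-- extension by zero of a family of bases of eigenspaces -/
noncomputable def auxBB {k V : Type*} [Field k] [AddCommGroup V] [Module k V] {g : End k V}
    (b : ∀ μ : k, Basis (Fin (finrank k (g.eigenspace μ))) k (g.eigenspace μ)) (μ : k) (j : ℕ) : V :=
  if h : j < finrank k (g.eigenspace μ) then (b μ ⟨j, h⟩ : V) else 0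

theorem auxBB_eig {k V : Type*} [Field k] [AddCommGroup V] [Module k V] {g : End k V}
    (b : ∀ μ : k, Basis (Fin (finrank k (g.eigenspace μ))) k (g.eigenspace μ)) (μ : k) (j : ℕ) :
    g (auxBB b μ j) = μ • auxBB b μ j := by
  unfold auxBB
  split_ifs with h
  · exact Module.End.mem_eigenspace_iff.mp (b μ ⟨j, h⟩).2
  · simp

theorem auxPi_x {k V : Type*} [Field k] [AddCommGroup V] [Module k V]
    (g x : End k V) (ζ : k) (hζ : ζ ≠ 0) (hx : g * x = ζ • (x * g)) (m : ℕ) (μ : k) (v : V) :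
    x (auxPi g m μ v) = auxPi g m (ζ * μ) (x v) := by
  have hx1 : ∀ w, x (g w) = ζ⁻¹ • g (x w) := fun w => by
    have := LinearMap.congr_fun hx w
    simp only [Module.End.mul_apply, LinearMap.smul_apply] at this
    rw [this, smul_smul, inv_mul_cancel₀ hζ, one_smul]
  have hx2 : ∀ l : ℕ, ∀ w, x ((g ^ l) w) = (ζ⁻¹) ^ l • (g ^ l) (x w) := by
    intro l
    induction l with
    | zero => simp
    | succ l ih =>
      intro w
      rw [pow_succ g, Module.End.mul_apply, ih, hx1, map_smul, smul_smul, ← pow_succ,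
        Module.End.mul_apply]
  rw [auxPi_apply, auxPi_apply, map_sum]
  refine Finset.sum_congr rfl fun l _ => ?_
  rw [map_smul, hx2, smul_smul, mul_inv, mul_pow, mul_comm]

theorem aux_eig_bot {k V : Type*} [Field k] [AddCommGroup V] [Module k V]
    (g : End k V) (hinj : Function.Injective g) (m : ℕ) (a : k)
    (hgm : g ^ m = a • (1 : End k V)) (μ : k) (h : ¬ (μ ≠ 0 ∧ μ ^ m = a)) : g.eigenspace μ = ⊥ := by
  rw [Submodule.eq_bot_iff]
  intro v hv
  rw [Module.End.mem_eigenspace_iff] at hv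
  by_contra hv0
  apply h
  constructor
  · rintro rfl
    rw [zero_smul] at hv
    exact hv0 (hinj (by rw [hv, map_zero]))
  · have : ∀ l : ℕ, (g ^ l) v = μ ^ l • v := by
      intro l
      induction l with
      | zero => simp
      | succ l ih =>
        rw [pow_succ, Module.End.mul_apply, hv, map_smul, ih, smul_smul, pow_succ, mul_comm]
    have h2 := this m
    rw [hgm] at h2
    have h3 : (a - μ ^ m) • v = 0 := by rw [sub_smul, ← h2]; simp
    rcases smul_eq_zero.mp h3 with h | h
    · exact (sub_eq_zero.mp h).symm
    · exact absurd h hv0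

theorem aux_nf {k V : Type*} [Field k] [IsAlgClosed k] [AddCommGroup V] [Module k V]
    [FiniteDimensional k V] (g : End k V) (hinj : Function.Injective g) {m : ℕ} (hm : 0 < m)
    {ζ : k} (hζ : IsPrimitiveRoot ζ m) (hmk : (m : k) ≠ 0) (a : k)
    (hgm : g ^ m = a • (1 : End k V))
    (c : Submodule k (End k V)) (hc1 : ∀ x ∈ c, g * x = ζ • (x * g))
    (hc2 : ∀ x ∈ c, ∀ y ∈ c, x * y = y * x) (hc3 : ∀ x ∈ c, x.IsSemisimple) :
    ∃ b : ∀ μ : k, Basis (Fin (finrank k (g.eigenspace μ))) k (g.eigenspace μ),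
      ∀ x ∈ c, ∃ t : ℕ → k, ∀ μ j, x (auxBB b μ j) = t j • auxBB b (ζ * μ) j := by
  have hζ0 : ζ ≠ 0 := hζ.ne_zero hm.ne'
  let f : c → End k V := fun y => y.1
  let E : (c → k) → Submodule k V := fun χ => ⨅ y, (f y).eigenspace (χ y)
  have hmg : ∀ (y : c) (φ : k), (f y).maxGenEigenspace φ = (f y).eigenspace φ := fun y φ =>
    (hc3 y.1 y.2).isFinitelySemisimple.maxGenEigenspace_eq_eigenspace φ
  have hmaps : ∀ (i j : c) (φ : k),
      Set.MapsTo (f i) ((f j).maxGenEigenspace φ) ((f j).maxGenEigenspace φ) := fun i j φ =>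
    Module.End.mapsTo_maxGenEigenspace_of_comm (hc2 j.1 j.2 i.1 i.2) φ
  have hind : iSupIndep E := by
    have := Module.End.independent_iInf_maxGenEigenspace_of_forall_mapsTo f hmaps
    simpa only [hmg] using this
  have htop : ⨆ χ, E χ = ⊤ := by
    have := Module.End.iSup_iInf_maxGenEigenspace_eq_top_of_forall_mapsTo f hmaps
      (fun i => Module.End.iSup_maxGenEigenspace_eq_top _)
    simpa only [hmg] using this
  have hmemE : ∀ χ v, v ∈ E χ ↔ ∀ y : c, y.1 v = χ y • v := fun χ v => by
    simp [E, f, Submodule.mem_iInf, Module.End.mem_eigenspace_iff]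
  have hgE : ∀ χ, ∀ v ∈ E χ, g v ∈ E (ζ⁻¹ • χ) := by
    intro χ v hv
    rw [hmemE] at hv ⊢
    intro y
    have h1 := LinearMap.congr_fun (hc1 y.1 y.2) v
    simp only [Module.End.mul_apply, LinearMap.smul_apply] at h1
    rw [hv y, map_smul] at h1
    rw [Pi.smul_apply, smul_assoc, h1, smul_smul, inv_mul_cancel₀ hζ0, one_smul]
  obtain ⟨R, hR0, hR1, hR2⟩ := aux_reps hm hζ.inv c
  obtain ⟨u, hu⟩ := aux_eigbasis (k := k) {v | ∃ χ ∈ R, v ∈ E χ} (⨆ χ ∈ R, E χ) (by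
    apply le_antisymm
    · rw [Submodule.span_le]
      rintro v ⟨χ, hχ, hv⟩
      exact (le_biSup E hχ) hv
    · exact iSup₂_le fun χ hχ v hv => Submodule.subset_span ⟨χ, hχ, hv⟩)
  choose X hXR hX using hu
  have hgood : ∀ μ : k, ∃ b : Basis (Fin (finrank k (g.eigenspace μ))) k (g.eigenspace μ),
      (μ ≠ 0 ∧ μ ^ m = a) → finrank k (⨆ χ ∈ R, E χ : Submodule k V) ≤ finrank k (g.eigenspace μ) ∧
      ∀ j : Fin (finrank k (g.eigenspace μ)),
        (∀ h : (j : ℕ) < _, (b j : V) = auxPi g m μ (u ⟨j, h⟩)) ∧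
        (finrank k (⨆ χ ∈ R, E χ : Submodule k V) ≤ (j : ℕ) → (b j : V) ∈ E 0) := by
    intro μ
    by_cases h : μ ≠ 0 ∧ μ ^ m = a
    · obtain ⟨h1, b, h2⟩ := aux_basis g hm hmk a hgm ζ⁻¹ E hind htop hgE R hR0 hR1 hR2 _ rfl _ u
        μ h.1 h.2
      exact ⟨b, fun _ => ⟨h1, h2⟩⟩
    · exact ⟨finBasis k _, fun h' => absurd h' h⟩
  choose b hb using hgood
  refine ⟨b, fun x hx => ?_⟩
  refine ⟨fun j => if h : j < _ then X ⟨j, h⟩ ⟨x, hx⟩ else 0, fun μ j => ?_⟩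
  beta_reduce
  by_cases hμ : μ ≠ 0 ∧ μ ^ m = a
  · have hμ' : ζ * μ ≠ 0 ∧ (ζ * μ) ^ m = a :=
      ⟨mul_ne_zero hζ0 hμ.1, by rw [mul_pow, hζ.pow_eq_one, one_mul, hμ.2]⟩
    obtain ⟨h1, h2⟩ := hb μ hμ
    obtain ⟨h1', h2'⟩ := hb _ hμ'
    by_cases hj : j < finrank k (⨆ χ ∈ R, E χ : Submodule k V)
    · have e1 : auxBB b μ j = auxPi g m μ (u ⟨j, hj⟩) := by
        rw [auxBB, dif_pos (lt_of_lt_of_le hj h1)]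
        exact (h2 _).1 hj
      have e2 : auxBB b (ζ * μ) j = auxPi g m (ζ * μ) (u ⟨j, hj⟩) := by
        rw [auxBB, dif_pos (lt_of_lt_of_le hj h1')]
        exact (h2' _).1 hj
      rw [dif_pos hj, e1, e2, auxPi_x g x ζ hζ0 (hc1 x hx),
        (hmemE _ _).mp (hX ⟨j, hj⟩) ⟨x, hx⟩, map_smul]
    · rw [dif_neg hj, zero_smul, auxBB]
      split_ifs with h
      · have := (hmemE _ _).mp ((h2 ⟨j, h⟩).2 (not_lt.mp hj)) ⟨x, hx⟩
        simpa using this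
      · simp
  · have hμ' : ¬ (ζ * μ ≠ 0 ∧ (ζ * μ) ^ m = a) := by
      rwa [mul_pow, hζ.pow_eq_one, one_mul, mul_ne_zero_iff, and_iff_right hζ0]
    have e1 : auxBB b μ j = 0 := by
      rw [auxBB, dif_neg]; rw [aux_eig_bot g hinj m a hgm μ hμ]; simp
    have e2 : auxBB b (ζ * μ) j = 0 := by
      rw [auxBB, dif_neg]; rw [aux_eig_bot g hinj m a hgm _ hμ']; simp
    rw [e1, e2]; simp

/-- the standard subspace of a family of bases -/
def auxStd {k V : Type*} [Field k] [AddCommGroup V] [Module k V] {g : End k V} (ζ : k)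
    (b : ∀ μ : k, Basis (Fin (finrank k (g.eigenspace μ))) k (g.eigenspace μ)) :
    Submodule k (End k V) where
  carrier := {x | ∃ t : ℕ → k, ∀ μ j, x (auxBB b μ j) = t j • auxBB b (ζ * μ) j}
  add_mem' := by
    rintro x y ⟨t, ht⟩ ⟨s, hs⟩
    exact ⟨t + s, fun μ j => by simp [ht, hs, add_smul]⟩
  zero_mem' := ⟨0, fun μ j => by simp⟩
  smul_mem' := by
    rintro r x ⟨t, ht⟩
    exact ⟨r • t, fun μ j => by simp [ht, mul_smul]⟩

/-- glue the bases of the eigenspaces -/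
theorem aux_glue {k V : Type*} [Field k] [AddCommGroup V] [Module k V] {g : End k V}
    (htop : ⨆ μ, g.eigenspace μ = ⊤)
    (b : ∀ μ : k, Basis (Fin (finrank k (g.eigenspace μ))) k (g.eigenspace μ)) :
    ∃ B : Basis (Σ μ : k, Fin (finrank k (g.eigenspace μ))) k V,
      ∀ p, B p = auxBB b p.1 p.2 := by
  classical
  have hI : DirectSum.IsInternal (fun μ : k => g.eigenspace μ) :=
    DirectSum.isInternal_submodule_of_iSupIndep_of_iSup_eq_top g.eigenspaces_iSupIndep htop
  refine ⟨hI.collectedBasis b, fun p => ?_⟩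
  rw [hI.collectedBasis_coe, auxBB, dif_pos p.2.2]

theorem auxStd_props {k V : Type*} [Field k] [AddCommGroup V] [Module k V]
    [FiniteDimensional k V] {g : End k V} (htop : ⨆ μ, g.eigenspace μ = ⊤) {m : ℕ} (hm : 0 < m)
    {ζ : k} (hζ : IsPrimitiveRoot ζ m) (hmk : (m : k) ≠ 0)
    (b : ∀ μ : k, Basis (Fin (finrank k (g.eigenspace μ))) k (g.eigenspace μ)) :
    (∀ x ∈ auxStd ζ b, g * x = ζ • (x * g)) ∧ (∀ x ∈ auxStd ζ b, ∀ y ∈ auxStd ζ b, x * y = y * x) ∧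
    (∀ x ∈ auxStd ζ b, x.IsSemisimple) := by
  obtain ⟨B, hB⟩ := aux_glue htop b
  refine ⟨?_, ?_, ?_⟩
  · rintro x ⟨t, ht⟩
    refine B.ext fun p => ?_
    simp only [hB, Module.End.mul_apply, LinearMap.smul_apply, ht, auxBB_eig, map_smul, smul_smul]
    congr 1; ring
  · rintro x ⟨t, ht⟩ y ⟨s, hs⟩
    refine B.ext fun p => ?_
    simp only [hB, Module.End.mul_apply, ht, hs, map_smul, smul_smul]
    congr 1; ring
  · rintro x ⟨t, ht⟩
    have hpow : ∀ l : ℕ, ∀ μ j, (x ^ l) (auxBB b μ j) = t j ^ l • auxBB b (ζ ^ l * μ) j := by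
      intro l
      induction l with
      | zero => simp
      | succ l ih =>
        intro μ j
        rw [pow_succ x, Module.End.mul_apply, ht, map_smul, ih, smul_smul, ← pow_succ', ← mul_assoc,
          ← pow_succ]
    classical
    have : Fintype (Σ μ : k, Fin (finrank k (g.eigenspace μ))) :=
      FiniteDimensional.fintypeBasisIndex B
    refine aux_ss x B B.span_eq
      (fun p => if t p.2 = 0 then Polynomial.X else Polynomial.X ^ m - Polynomial.C (t p.2 ^ m))
      (fun p => ?_) fun p => ?_
    · split_ifs with h
      · exact Polynomial.separable_X.squarefree
      · exact (Polynomial.separable_X_pow_sub_C _ hmk (pow_ne_zero _ h)).squarefree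
    · rw [hB]
      split_ifs with h
      · simp [ht, h]
      · rw [map_sub, map_pow, Polynomial.aeval_X, Polynomial.aeval_C, LinearMap.sub_apply, hpow,
          hζ.pow_eq_one, one_mul, algebraMap_end_apply, sub_self]

theorem auxStd_conj {k V : Type*} [Field k] [AddCommGroup V] [Module k V]
    [FiniteDimensional k V] {g : End k V} (htop : ⨆ μ, g.eigenspace μ = ⊤) (ζ : k)
    (b₁ b₂ : ∀ μ : k, Basis (Fin (finrank k (g.eigenspace μ))) k (g.eigenspace μ)) :
    ∃ h h' : End k V, h * h' = 1 ∧ h' * h = 1 ∧ h * g = g * h ∧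
      (∀ x ∈ auxStd ζ b₁, h * x * h' ∈ auxStd ζ b₂) ∧
      (∀ x ∈ auxStd ζ b₂, h' * x * h ∈ auxStd ζ b₁) := by
  obtain ⟨B₁, hB₁⟩ := aux_glue htop b₁
  obtain ⟨B₂, hB₂⟩ := aux_glue htop b₂
  let e := B₁.equiv B₂ (Equiv.refl _)
  have he : ∀ μ j, e (auxBB b₁ μ j) = auxBB b₂ μ j := by
    intro μ j
    by_cases hj : j < finrank k (g.eigenspace μ)
    · rw [← hB₁ ⟨μ, ⟨j, hj⟩⟩, ← hB₂ ⟨μ, ⟨j, hj⟩⟩]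
      simp [e]
    · simp [auxBB, hj]
  have he' : ∀ μ j, e.symm (auxBB b₂ μ j) = auxBB b₁ μ j := fun μ j => by
    rw [← he, e.symm_apply_apply]
  refine ⟨e.toLinearMap, e.symm.toLinearMap, ?_, ?_, ?_, ?_, ?_⟩
  · ext v; simp
  · ext v; simp
  · refine B₁.ext fun p => ?_
    simp [hB₁, auxBB_eig, he]
  · rintro x ⟨t, ht⟩
    exact ⟨t, fun μ j => by simp [he, he', ht]⟩
  · rintro x ⟨t, ht⟩
    exact ⟨t, fun μ j => by simp [he, he', ht]⟩

theorem aux_cartan_s19 {k : Type*} [Field k] [IsAlgClosed k]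
    (m : ℕ) (hm : 0 < m) (ζ : k) (hζ : IsPrimitiveRoot ζ m) (hmk : (m : k) ≠ 0)
    (n : ℕ) (g : Matrix (Fin n) (Fin n) k) (hg : IsUnit g.det)
    (a : k) (hgm : (Matrix.toLin' g : Module.End k (Fin n → k)) ^ m = a • (1 : Module.End k (Fin n → k)))
    (htop : ⨆ μ, Module.End.eigenspace (Matrix.toLin' g) μ = ⊤)
    (c : Submodule k (Matrix (Fin n) (Fin n) k))
    (h : IsCartanSubspace {x | g * x * g⁻¹ = ζ • x} c) :
    ∃ b : ∀ μ : k, Basis (Fin (finrank k (Module.End.eigenspace (Matrix.toLin' g) μ))) k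
      (Module.End.eigenspace (Matrix.toLin' g) μ),
      ∀ x, x ∈ c ↔ Matrix.toLin' x ∈ auxStd ζ b := by
  obtain ⟨h1, h2, h3, h4⟩ := h
  have hinj : Function.Injective (Matrix.toLin' g) := by
    intro v w hvw
    have := congrArg (Matrix.toLin' g⁻¹) hvw
    simpa [Matrix.nonsing_inv_mul _ hg] using this
  have hiff : ∀ x : Matrix (Fin n) (Fin n) k, g * x * g⁻¹ = ζ • x ↔ g * x = ζ • (x * g) := by
    intro x
    constructor
    · intro hx
      rw [← smul_mul_assoc, ← hx, Matrix.mul_assoc, Matrix.nonsing_inv_mul _ hg, Matrix.mul_one]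
    · intro hx
      rw [hx, smul_mul_assoc, Matrix.mul_assoc, Matrix.mul_nonsing_inv _ hg, Matrix.mul_one]
  have hmul : ∀ x y : Matrix (Fin n) (Fin n) k, (Matrix.toLin' (x * y) : Module.End k (Fin n → k)) =
      (Matrix.toLin' x : Module.End k (Fin n → k)) * (Matrix.toLin' y : Module.End k (Fin n → k)) :=
    fun x y => Matrix.toLin'_mul x y
  obtain ⟨b, hb⟩ := aux_nf (Matrix.toLin' g) hinj hm hζ hmk a hgm
    (c.map (Matrix.toLin' : Matrix (Fin n) (Fin n) k ≃ₗ[k] _).toLinearMap)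
    (by
      rintro _ ⟨x, hx, rfl⟩
      have := congrArg Matrix.toLin' ((hiff x).mp (h1 hx))
      rw [map_smul, hmul, hmul] at this
      exact this)
    (by
      rintro _ ⟨x, hx, rfl⟩ _ ⟨y, hy, rfl⟩
      have := congrArg Matrix.toLin' (h2 x hx y hy)
      rw [hmul, hmul] at this
      exact this)
    (by
      rintro _ ⟨x, hx, rfl⟩
      exact aux_ssmat_to x (h3 x hx))
  refine ⟨b, ?_⟩
  obtain ⟨p1, p2, p3⟩ := auxStd_props htop hm hζ hmk b
  have := h4 ((auxStd ζ b).comap (Matrix.toLin' : Matrix (Fin n) (Fin n) k ≃ₗ[k] _).toLinearMap)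
    ⟨fun x hx => (hiff x).mpr (Matrix.toLin'.injective (by
        rw [map_smul, hmul, hmul]; exact p1 _ hx)),
      fun x hx y hy => Matrix.toLin'.injective (by rw [hmul, hmul]; exact p2 _ hx _ hy),
      fun x hx => aux_ssmat_of x (p3 _ hx)⟩
    (fun x hx => hb _ ⟨x, hx, rfl⟩)
  intro x
  rw [← this]
  rfl

end

theorem stmt19 {k : Type*} [Field k] [IsAlgClosed k]
    (m : ℕ) (hm : 0 < m) (ζ : k) (hζ : IsPrimitiveRoot ζ m)
    (n : ℕ) (g : Matrix (Fin n) (Fin n) k) (hg : IsUnit g.det)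
    (hscal : ∃ a : k, g ^ m = a • (1 : Matrix (Fin n) (Fin n) k))
    (c₁ c₂ : Submodule k (Matrix (Fin n) (Fin n) k))
    (h₁ : IsCartanSubspace {x | g * x * g⁻¹ = ζ • x} c₁)
    (h₂ : IsCartanSubspace {x | g * x * g⁻¹ = ζ • x} c₂) :
    ∃ h : Matrix (Fin n) (Fin n) k, IsUnit h.det ∧ h * g = g * h ∧
      {y | ∃ x ∈ c₁, y = h * x * h⁻¹} = (c₂ : Set (Matrix (Fin n) (Fin n) k)) := by
  obtain ⟨a, ha⟩ := hscal
  have : NeZero m := ⟨hm.ne'⟩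
  have hmk : (m : k) ≠ 0 := hζ.neZero'.out
  rcases Nat.eq_zero_or_pos n with rfl | hn
  · refine ⟨1, by simp, by simp, ?_⟩
    ext y
    have h0 : ∀ z : Matrix (Fin 0) (Fin 0) k, z = 0 := fun z => Subsingleton.elim _ _
    constructor
    · rintro _
      rw [h0 y]; exact c₂.zero_mem
    · intro _
      exact ⟨0, c₁.zero_mem, Subsingleton.elim _ _⟩
  have : Nonempty (Fin n) := ⟨⟨0, hn⟩⟩
  have ha0 : a ≠ 0 := by
    rintro rfl
    have h1 : IsUnit (g ^ m).det := by rw [Matrix.det_pow]; exact hg.pow m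
    rw [ha, zero_smul, Matrix.det_zero] at h1
    exact not_isUnit_zero h1
  have hgm : (Matrix.toLin' g : Module.End k (Fin n → k)) ^ m = a • (1 : Module.End k (Fin n → k)) := by
    rw [← Matrix.toLin'_pow, ha, map_smul, Matrix.toLin'_one]; rfl
  have hss : Module.End.IsSemisimple (Matrix.toLin' g) :=
    Module.End.isSemisimple_of_squarefree_aeval_eq_zero
      (Polynomial.separable_X_pow_sub_C a hmk ha0).squarefree (by
        rw [map_sub, map_pow, Polynomial.aeval_X, Polynomial.aeval_C, hgm,
          Algebra.algebraMap_eq_smul_one, sub_self])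
  have htop := hss.iSup_eigenspace_eq_top
  obtain ⟨b₁, hb₁⟩ := aux_cartan_s19 m hm ζ hζ hmk n g hg a hgm htop c₁ h₁
  obtain ⟨b₂, hb₂⟩ := aux_cartan_s19 m hm ζ hζ hmk n g hg a hgm htop c₂ h₂
  obtain ⟨h, h', e1, e2, e3, e4, e5⟩ := auxStd_conj htop ζ b₁ b₂
  have hmul : ∀ x y : Matrix (Fin n) (Fin n) k, (Matrix.toLin' (x * y) : Module.End k (Fin n → k)) =
      (Matrix.toLin' x : Module.End k (Fin n → k)) * (Matrix.toLin' y : Module.End k (Fin n → k)) :=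
    fun x y => Matrix.toLin'_mul x y
  obtain ⟨H, rfl⟩ := Matrix.toLin'.surjective h
  obtain ⟨H', rfl⟩ := Matrix.toLin'.surjective h'
  have E1 : H * H' = 1 := Matrix.toLin'.injective (by rw [hmul, Matrix.toLin'_one]; exact e1)
  have E2 : H' * H = 1 := Matrix.toLin'.injective (by rw [hmul, Matrix.toLin'_one]; exact e2)
  have E3 : H * g = g * H := Matrix.toLin'.injective (by rw [hmul, hmul]; exact e3)
  have Hi : H⁻¹ = H' := Matrix.inv_eq_right_inv E1
  refine ⟨H, Matrix.isUnit_det_of_right_inverse E1, E3, ?_⟩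
  rw [Hi]
  ext y
  constructor
  · rintro ⟨x, hx, rfl⟩
    refine (hb₂ _).mpr ?_
    rw [hmul, hmul]
    exact e4 _ ((hb₁ x).mp hx)
  · intro hy
    refine ⟨H' * y * H, (hb₁ _).mpr ?_, ?_⟩
    · rw [hmul, hmul]
      exact e5 _ ((hb₂ y).mp hy)
    · calc y = (H * H') * y * (H * H') := by rw [E1, Matrix.one_mul, Matrix.mul_one]
        _ = _ := by simp only [Matrix.mul_assoc]
end
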